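/- Let n ≥ 2 and let K ⊂ ℝ^{n+1} be a smooth, strictly convex body with the origin in its interior, whose support function h, radial function r, and Gauss curvature 𝒦 satisfy h^{p-1} |Dh|^{n+1-q} 𝒦 = 1 on S^n with n ≤ q ≤ n+1. Set α = q − n − 1 and dV = h σ_n dμ with σ_n = 1/𝒦. Then (n+1+p) ∫ r^{2α} |∇̄h|² dV ≤ n |∫ r^{α} X dV|² / ∫ dV, where X = Dh and |·| is the Euclidean norm on ℝ^{n+1}. -/

import Mathlib

open MeasureTheory Matrix Metric
open scoped RealInnerProductSpace

noncomputable section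

/-- Euclidean space `ℝ^{n+1}`. -/
abbrev Euc (n : ℕ) : Type := EuclideanSpace ℝ (Fin (n + 1))

/-- The Euclidean Hessian matrix of `H : ℝ^{n+1} → ℝ` at `x`. -/
def ehess (n : ℕ) (H : Euc n → ℝ) (x : Euc n) : Matrix (Fin (n + 1)) (Fin (n + 1)) ℝ :=
  Matrix.of fun i j =>
    fderiv ℝ (fun y => fderiv ℝ H y (EuclideanSpace.single j 1)) x (EuclideanSpace.single i 1)

/-- For the 1-homogeneous extension `H` of the support function `h` and `x ∈ S^n`, the matrix
`D²H(x) + h(x)·x xᵀ`.  Its restriction to the tangent space `x^⊥ = T_x S^n` is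
`A[h] = ∇̄²h + h ḡ`, and `x` is an eigenvector with eigenvalue `h(x)`. -/
def bmat (n : ℕ) (H : Euc n → ℝ) (x : Euc n) : Matrix (Fin (n + 1)) (Fin (n + 1)) ℝ :=
  ehess n H x + Matrix.of fun i j => H x * (x i * x j)

/-- `σ_n = det A[h] = det(∇̄²h + h ḡ)/det ḡ`, computed as `det(bmat)/h`. -/
def sigman (n : ℕ) (H : Euc n → ℝ) (x : Euc n) : ℝ :=
  Matrix.det (bmat n H x) / H x

/-- The Gauss curvature `𝒦 = 1/σ_n`. -/
def gaussCurv (n : ℕ) (H : Euc n → ℝ) (x : Euc n) : ℝ := (sigman n H x)⁻¹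

/-- The round (spherical) gradient `∇̄f` at `x ∈ S^n`: the Euclidean gradient of the
0-homogeneous extension `y ↦ f(y/‖y‖)`.  It depends only on `f|_{S^n}` and lies in `T_x S^n`. -/
def sphGrad (n : ℕ) (f : Euc n → ℝ) (x : Euc n) : Euc n :=
  gradient (fun y => f (‖y‖⁻¹ • y)) x

/-- The function `log (h^{n+2}/𝒦)` (as a function of `y`; on the sphere it agrees with the
centro-affine expression appearing in the paper). -/
def logQ (n : ℕ) (H : Euc n → ℝ) (y : Euc n) : ℝ :=
  Real.log ((H y) ^ (n + 2) / gaussCurv n H y)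

/-- The centro-affine inner product `g(∇f, ∇u) = h ⟨A[h]⁻¹ ∇̄f, ∇̄u⟩` of the `g`-gradients of
`f` and `u`, where `g = A[h]/h` is the centro-affine metric. -/
def gInner (n : ℕ) (H f u : Euc n → ℝ) (x : Euc n) : ℝ :=
  H x * ∑ i, (bmat n H x)⁻¹.mulVec (fun j => sphGrad n f x j) i * sphGrad n u x i

/-- The squared centro-affine norm `|∇f|_g²` of the `g`-gradient of `f`. -/
def gNormSq (n : ℕ) (H f : Euc n → ℝ) (x : Euc n) : ℝ := gInner n H f f x

/-- The centro-affine Laplacian `Δf = div_g(∇ f)` (with respect to the centro-affine connection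
`∇` induced by the centro-affine normal `ξ = X`, and the centro-affine metric `g = A[h]/h`),
computed via the identity `Δf = tr_g(A[hf]/h) - n f`, i.e.
`Δf = tr(B[h]⁻¹ B[hf]) - (n+1) f` where `B[u] = D²ũ + u·x xᵀ` for the 1-homogeneous
extension `ũ` of `u`. -/
def caLap (n : ℕ) (H f : Euc n → ℝ) (x : Euc n) : ℝ :=
  Matrix.trace ((bmat n H x)⁻¹ * bmat n (fun y => H y * f (‖y‖⁻¹ • y)) x) - (n + 1) * f x

/-- The spherical Lebesgue measure on `S^n ⊂ ℝ^{n+1}` (up to a positive constant). -/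
def sphMeasure (n : ℕ) : Measure (sphere (0 : Euc n) 1) :=
  (volume : Measure (Euc n)).toSphere

/-- The density of the cone-volume-type measure `dV = h σ_n dμ` with respect to the spherical
Lebesgue measure. -/
def volDens (n : ℕ) (H : Euc n → ℝ) (x : Euc n) : ℝ := H x * sigman n H x

/-!
Let `K` have support function `H`, let `X = ∇H` and `r = ‖X‖`. The Brunn–Minkowski inequality makes
`ε ↦ Vol (h (1 + ε f))` concave to second order after taking the power `1 / (n + 1)`. This is the
local Brunn–Minkowski inequality, a spectral gap for the cone-volume measure: if the gradient of `f`
is `D²H w`, then `n` times the variance of `f` is at most `∫ h ⟪D²H w, w⟫ dV`. The volume enters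
only through the map `y ↦ ‖y‖ ∇H(y)`, which parametrizes `K` over the unit ball with Jacobian
`h σ_n`.

Applied to the coordinates of `r ^ α X` and summed, the right-hand side becomes the trace term
`∫ h (r ^ (2 α) tr D²H + (2 α + α²) r ^ (2 α - 2) ⟪D²H X, X⟫) dV`. As `h σ_n = h ^ p r ^ (-α)`, the
divergence theorem on the sphere for the field `h ^ (p + 1) r ^ α ∇̄h` removes `tr D²H`; it leaves
the terms of the claim and `α (α + 1) ∫ h r ^ (2 α - 2) ⟪D²H X, X⟫ dV ≤ 0`.
-/

section PrekopaLeindler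

open scoped ENNReal NNReal Pointwise

theorem volume_add_le_volume_add_of_isCompact {K L : Set ℝ} (hK : IsCompact K) (hL : IsCompact L)
    (hK₀ : K.Nonempty) (hL₀ : L.Nonempty) : volume K + volume L ≤ volume (K + L) := by
  obtain ⟨a, haK, ha⟩ := hK.exists_isGreatest hK₀
  obtain ⟨b, hbL, hb⟩ := hL.exists_isLeast hL₀
  have hinter : volume ((· + b) '' K ∩ (a + ·) '' L) = 0 := by
    refine measure_mono_null (t := {a + b}) ?_ (measure_singleton _)
    rintro _ ⟨⟨x, hx, rfl⟩, y, hy, hxy⟩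
    have := ha hx
    have := hb hy
    simp only [Set.mem_singleton_iff] at hxy ⊢
    linarith
  calc volume K + volume L
    _ = volume ((· + b) '' K ∪ (a + ·) '' L) := by
      rw [measure_union₀ (hL.image (by fun_prop)).measurableSet.nullMeasurableSet hinter]
      simp
    _ ≤ volume (K + L) := measure_mono <| Set.union_subset
      (Set.image_subset_iff.2 fun x hx ↦ Set.add_mem_add hx hbL)
      (Set.image_subset_iff.2 fun y hy ↦ Set.add_mem_add haK hy)

theorem volume_add_le_of_add_subset {A B C : Set ℝ} (hA : MeasurableSet A) (hB : MeasurableSet B)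
    (hA₀ : A.Nonempty) (hB₀ : B.Nonempty) (hC : A + B ⊆ C) :
    volume A + volume B ≤ volume C := by
  obtain ⟨a, ha⟩ := hA₀
  obtain ⟨b, hb⟩ := hB₀
  rw [hA.measure_eq_iSup_isCompact, hB.measure_eq_iSup_isCompact]
  simp only [iSup_and']
  refine ENNReal.biSup_add_biSup_le' ⟨∅, by simp⟩ ⟨∅, by simp⟩ fun K hK L hL ↦ ?_
  calc volume K + volume L ≤ volume (insert a K) + volume (insert b L) := by
        gcongr <;> exact Set.subset_insert _ _
    _ ≤ volume (insert a K + insert b L) :=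
        volume_add_le_volume_add_of_isCompact (hK.2.insert a) (hL.2.insert b)
          (Set.insert_nonempty _ _) (Set.insert_nonempty _ _)
    _ ≤ volume C := measure_mono <|
        (Set.add_subset_add (Set.insert_subset ha hK.1) (Set.insert_subset hb hL.1)).trans hC

variable {a b : ℝ≥0}

theorem mul_volume_add_mul_volume_le {A B C : Set ℝ} (hA : MeasurableSet A)
    (hB : MeasurableSet B) (hA₀ : A.Nonempty) (hB₀ : B.Nonempty)
    (hC : ∀ x ∈ A, ∀ y ∈ B, a * x + b * y ∈ C) : a * volume A + b * volume B ≤ volume C := by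
  have hvol (c : ℝ≥0) (S : Set ℝ) : volume ((c : ℝ) • S) = c * volume S := by
    simp [Measure.addHaar_smul]
  rw [← hvol, ← hvol]
  refine volume_add_le_of_add_subset (hA.const_smul₀ _) (hB.const_smul₀ _) hA₀.smul_set
    hB₀.smul_set ?_
  rintro _ ⟨_, ⟨x, hx, rfl⟩, _, ⟨y, hy, rfl⟩, rfl⟩
  exact hC x hx y hy

theorem mul_lintegral_add_mul_lintegral_le {f g h : ℝ → ℝ≥0}
    (hf : Measurable f) (hg : Measurable g) (hh : Measurable h) {x₀ y₀ : ℝ}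
    (hfx₀ : ∀ x, f x ≤ f x₀) (hgy₀ : ∀ y, g y ≤ g y₀) (hfg : f x₀ = g y₀)
    (hlevel : ∀ t x y, t < f x → t < g y → t < h (a * x + b * y)) :
    a * (∫⁻ x, f x) + b * ∫⁻ x, g x ≤ ∫⁻ x, h x := by
  have layercake (k : ℝ → ℝ≥0) (hk : Measurable k) :
      ∫⁻ x, k x = ∫⁻ t in Set.Ioi (0 : ℝ), volume {x | t < k x} := by
    simpa using lintegral_eq_lintegral_meas_lt volume (.of_forall fun x ↦ (k x).coe_nonneg)
      (by fun_prop : AEMeasurable (fun x ↦ (k x : ℝ)))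
  have hmeas (k : ℝ → ℝ≥0) : Measurable fun t : ℝ ↦ volume {x | t < k x} :=
    Antitone.measurable fun s t hst ↦ measure_mono fun x hx ↦ lt_of_le_of_lt hst hx
  rw [layercake f hf, layercake g hg, layercake h hh, ← lintegral_const_mul _ (hmeas f),
    ← lintegral_const_mul _ (hmeas g), ← lintegral_add_left ((hmeas f).const_mul _)]
  refine setLIntegral_mono' measurableSet_Ioi fun t ht ↦ ?_
  lift t to ℝ≥0 using (Set.mem_Ioi.1 ht).le
  simp only [NNReal.coe_lt_coe]
  obtain htx₀ | htx₀ := lt_or_ge t (f x₀)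
  · exact mul_volume_add_mul_volume_le (measurableSet_lt measurable_const hf)
      (measurableSet_lt measurable_const hg) ⟨x₀, htx₀⟩ ⟨y₀, htx₀.trans_eq hfg⟩
      fun x hx y hy ↦ hlevel t x y hx hy
  · have hfe : {x | t < f x} = ∅ := by ext x; simpa using (hfx₀ x).trans htx₀
    have hge : {x | t < g x} = ∅ := by ext x; simpa using (hgy₀ x).trans (hfg ▸ htx₀)
    simp [hfe, hge]

theorem rpow_mul_rpow_le_mul_add_mul (ha : 0 < a) (hb : 0 < b) (hab : a + b = 1) (x y : ℝ≥0∞) :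
    x ^ (a : ℝ) * y ^ (b : ℝ) ≤ a * x + b * y := by
  obtain rfl | hx := eq_or_ne x ⊤
  · simp [ENNReal.mul_top, ha.ne']
  obtain rfl | hy := eq_or_ne y ⊤
  · simp [ENNReal.mul_top, hb.ne']
  lift x to ℝ≥0 using hx
  lift y to ℝ≥0 using hy
  rw [← ENNReal.coe_rpow_of_nonneg _ a.coe_nonneg, ← ENNReal.coe_rpow_of_nonneg _ b.coe_nonneg]
  exact_mod_cast NNReal.geom_mean_le_arith_mean2_weighted a b x y hab

theorem lt_rpow_mul_rpow (ha : 0 < a) (hb : 0 < b) (hab : a + b = 1) {t x y : ℝ≥0} (hx : t < x)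
    (hy : t < y) : t < x ^ (a : ℝ) * y ^ (b : ℝ) :=
  calc t = t ^ (a : ℝ) * t ^ (b : ℝ) := by
        rw [← NNReal.rpow_add_of_nonneg _ a.coe_nonneg b.coe_nonneg, ← NNReal.coe_add, hab]; simp
    _ < x ^ (a : ℝ) * y ^ (b : ℝ) := by gcongr

theorem mul_lintegral_add_mul_lintegral_le_of_normalized {f g : ℝ → ℝ≥0} {h : ℝ → ℝ≥0∞}
    (ha : 0 < a) (hb : 0 < b) (hab : a + b = 1)
    (hf : Measurable f) (hg : Measurable g) (hh : Measurable h) {x₀ y₀ : ℝ}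
    (hfx₀ : ∀ x, f x ≤ f x₀) (hgy₀ : ∀ y, g y ≤ g y₀) (hf₁ : f x₀ = 1) (hg₁ : g y₀ = 1)
    (hfgh : ∀ x y, f x ^ (a : ℝ) * g y ^ (b : ℝ) ≤ h (a * x + b * y)) :
    a * (∫⁻ x, f x) + b * ∫⁻ x, g x ≤ ∫⁻ x, h x := by
  -- Truncating `h` at the common maximum `1` makes it finite and keeps its superlevel sets below.
  have hmin (x : ℝ) : ((min (h x) 1).toNNReal : ℝ≥0∞) = min (h x) 1 :=
    ENNReal.coe_toNNReal (by simp)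
  refine (mul_lintegral_add_mul_lintegral_le (h := fun x ↦ (min (h x) 1).toNNReal) hf hg
    (by fun_prop) hfx₀ hgy₀ (hf₁.trans hg₁.symm) fun t x y htx hty ↦ ?_).trans
    (lintegral_mono fun x ↦ (hmin x).trans_le (min_le_left _ _))
  rw [← ENNReal.coe_lt_coe, hmin]
  refine lt_min (lt_of_lt_of_le ?_ (hfgh x y)) ?_
  · rw [← ENNReal.coe_rpow_of_nonneg _ a.coe_nonneg, ← ENNReal.coe_rpow_of_nonneg _ b.coe_nonneg]
    exact_mod_cast lt_rpow_mul_rpow ha hb hab htx hty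
  · exact_mod_cast htx.trans_le ((hfx₀ x).trans_eq hf₁)

theorem exists_forall_apply_le (φ : SimpleFunc ℝ ℝ≥0) : ∃ x₀, ∀ x, φ x ≤ φ x₀ := by
  obtain ⟨_, ⟨x₀, rfl⟩, hx₀⟩ :=
    Set.exists_max_image _ id φ.finite_range (Set.range_nonempty φ)
  exact ⟨x₀, fun x ↦ hx₀ _ ⟨x, rfl⟩⟩

theorem prekopa_leindler_simpleFunc (ha : 0 < a) (hb : 0 < b) (hab : a + b = 1)
    (φ ψ : SimpleFunc ℝ ℝ≥0) {h : ℝ → ℝ≥0∞} (hh : Measurable h)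
    (hφψ : ∀ x y, (φ x : ℝ≥0∞) ^ (a : ℝ) * ψ y ^ (b : ℝ) ≤ h (a * x + b * y)) :
    (∫⁻ x, φ x) ^ (a : ℝ) * (∫⁻ x, ψ x) ^ (b : ℝ) ≤ ∫⁻ x, h x := by
  have ha' : (0 : ℝ) < a := ha
  have hb' : (0 : ℝ) < b := hb
  obtain ⟨x₀, hx₀⟩ := exists_forall_apply_le φ
  obtain ⟨y₀, hy₀⟩ := exists_forall_apply_le ψ
  obtain hA | hA := eq_or_ne (φ x₀) 0
  · have hφ (x : ℝ) : φ x = 0 := by simpa [hA] using hx₀ x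
    simp [hφ, ha']
  obtain hB | hB := eq_or_ne (ψ y₀) 0
  · have hψ (y : ℝ) : ψ y = 0 := by simpa [hB] using hy₀ y
    simp [hψ, hb']
  set A := φ x₀
  set B := ψ y₀
  set c := A ^ (a : ℝ) * B ^ (b : ℝ) with hc
  have hscale (x y : ℝ≥0∞) : (x * (A⁻¹ : ℝ≥0)) ^ (a : ℝ) * (y * (B⁻¹ : ℝ≥0)) ^ (b : ℝ) =
      x ^ (a : ℝ) * y ^ (b : ℝ) * (c⁻¹ : ℝ≥0) := by
    rw [ENNReal.mul_rpow_of_nonneg _ _ ha'.le, ENNReal.mul_rpow_of_nonneg _ _ hb'.le,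
      ← ENNReal.coe_rpow_of_nonneg _ ha'.le, ← ENNReal.coe_rpow_of_nonneg _ hb'.le,
      NNReal.inv_rpow, NNReal.inv_rpow, hc, mul_inv, ENNReal.coe_mul]
    ring
  have hle := mul_lintegral_add_mul_lintegral_le_of_normalized ha hb hab
    (f := fun x ↦ φ x * A⁻¹) (g := fun y ↦ ψ y * B⁻¹) (h := fun x ↦ h x * (c⁻¹ : ℝ≥0))
    (φ.measurable.mul_const _) (ψ.measurable.mul_const _) (hh.mul_const _)
    (fun x ↦ mul_le_mul_left (hx₀ x) _) (fun y ↦ mul_le_mul_left (hy₀ y) _)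
    (mul_inv_cancel₀ hA) (mul_inv_cancel₀ hB) fun x y ↦ by
      rw [ENNReal.coe_mul, ENNReal.coe_mul, hscale]
      exact mul_le_mul_left (hφψ x y) _
  simp only [ENNReal.coe_mul, lintegral_mul_const' _ _ ENNReal.coe_ne_top] at hle
  refine (ENNReal.mul_le_mul_iff_left (ENNReal.coe_ne_zero.2 (?_ : c⁻¹ ≠ 0))
    ENNReal.coe_ne_top).1 (((hscale _ _).symm.trans_le
      (rpow_mul_rpow_le_mul_add_mul ha hb hab _ _)).trans hle)
  positivity

theorem prekopa_leindler_real (ha : 0 < a) (hb : 0 < b) (hab : a + b = 1) {f g h : ℝ → ℝ≥0∞}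
    (hh : Measurable h) (hfgh : ∀ x y, f x ^ (a : ℝ) * g y ^ (b : ℝ) ≤ h (a * x + b * y)) :
    (∫⁻ x, f x) ^ (a : ℝ) * (∫⁻ x, g x) ^ (b : ℝ) ≤ ∫⁻ x, h x := by
  have exists_simpleFunc (k : ℝ → ℝ≥0∞) {c : ℝ≥0} (hc : 0 < c) {u : ℝ≥0∞}
      (hu : u < (∫⁻ x, k x) ^ (c : ℝ)) :
      ∃ φ : SimpleFunc ℝ ℝ≥0, (∀ x, φ x ≤ k x) ∧ u ≤ (∫⁻ x, φ x) ^ (c : ℝ) := by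
    rw [← ENNReal.rpow_inv_lt_iff (by exact_mod_cast hc), lintegral_eq_nnreal] at hu
    simp only [lt_iSup_iff] at hu
    obtain ⟨φ, hφk, hφ⟩ := hu
    rw [← SimpleFunc.lintegral_eq_lintegral] at hφ
    exact ⟨φ, hφk, (ENNReal.rpow_inv_le_iff (by exact_mod_cast hc)).1 hφ.le⟩
  refine ENNReal.mul_le_of_forall_lt fun u hu v hv ↦ ?_
  obtain ⟨φ, hφ, huφ⟩ := exists_simpleFunc f ha hu
  obtain ⟨ψ, hψ, hvψ⟩ := exists_simpleFunc g hb hv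
  refine (mul_le_mul' huφ hvψ).trans
    (prekopa_leindler_simpleFunc ha hb hab φ ψ hh fun x y ↦ le_trans ?_ (hfgh x y))
  gcongr
  exacts [hφ x, hψ y]

theorem prekopa_leindler (ha : 0 < a) (hb : 0 < b) (hab : a + b = 1) (N : ℕ) :
    ∀ {f g h : (Fin N → ℝ) → ℝ≥0∞}, Measurable f → Measurable g → Measurable h →
      (∀ x y, f x ^ (a : ℝ) * g y ^ (b : ℝ) ≤ h (a • x + b • y)) →
      (∫⁻ x, f x) ^ (a : ℝ) * (∫⁻ x, g x) ^ (b : ℝ) ≤ ∫⁻ x, h x := by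
  induction N with
  | zero =>
    intro f g h _ _ _ hfgh
    simp only [lintegral_unique, volume_pi, Measure.pi_empty_univ, mul_one]
    exact (hfgh _ _).trans_eq (congrArg h (Subsingleton.elim _ _))
  | succ N ih =>
    intro f g h hf hg hh hfgh
    let e := MeasurableEquiv.piFinSuccAbove (fun _ : Fin (N + 1) ↦ ℝ) 0
    have he : MeasurePreserving e.symm := (volume_preserving_piFinSuccAbove (fun _ ↦ ℝ) 0).symm _
    have hmeas {k : (Fin (N + 1) → ℝ) → ℝ≥0∞} (hk : Measurable k) :
        Measurable fun p ↦ k (e.symm p) := hk.comp e.symm.measurable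
    have fubini {k : (Fin (N + 1) → ℝ) → ℝ≥0∞} (hk : Measurable k) :
        ∫⁻ x, k x = ∫⁻ t, ∫⁻ y, k (e.symm (t, y)) := by
      rw [← he.lintegral_comp hk]
      exact lintegral_prod _ (hmeas hk).aemeasurable
    have he_add (s t : ℝ) (x y : Fin N → ℝ) :
        a • e.symm (s, x) + b • e.symm (t, y) = e.symm (a * s + b * t, a • x + b • y) := by
      ext i
      refine Fin.cases ?_ (fun j ↦ ?_) i <;>
        simp [e, MeasurableEquiv.piFinSuccAbove, Fin.insertNthEquiv, NNReal.smul_def]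
    rw [fubini hf, fubini hg, fubini hh]
    refine prekopa_leindler_real ha hb hab (hmeas hh).lintegral_prod_right' fun s t ↦ ?_
    exact ih ((hmeas hf).comp measurable_prodMk_left) ((hmeas hg).comp measurable_prodMk_left)
      ((hmeas hh).comp measurable_prodMk_left) fun x y ↦ he_add s t x y ▸ hfgh _ _

theorem brunn_minkowski {E : Type*} [NormedAddCommGroup E] [InnerProductSpace ℝ E]
    [FiniteDimensional ℝ E] [MeasurableSpace E] [BorelSpace E] (ha : 0 < a) (hb : 0 < b)
    (hab : a + b = 1) {A B C : Set E} (hA : MeasurableSet A) (hB : MeasurableSet B)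
    (hC : MeasurableSet C) (hABC : ∀ x ∈ A, ∀ y ∈ B, a • x + b • y ∈ C) :
    volume A ^ (a : ℝ) * volume B ^ (b : ℝ) ≤ volume C := by
  set e : (Fin (Module.finrank ℝ E) → ℝ) → E :=
    fun v ↦ (stdOrthonormalBasis ℝ E).repr.symm (WithLp.toLp 2 v)
  have he : MeasurePreserving e :=
    (stdOrthonormalBasis ℝ E).measurePreserving_repr_symm.comp
      (EuclideanSpace.volume_preserving_symm_measurableEquiv_toLp _).symm
  have he_add (x y : Fin (Module.finrank ℝ E) → ℝ) : e (a • x + b • y) = a • e x + b • e y := by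
    simp [e, NNReal.smul_def]
  have hind {S : Set E} (hS : MeasurableSet S) :
      volume S = ∫⁻ v, (e ⁻¹' S).indicator 1 v := by
    rw [lintegral_indicator_one (he.measurable hS), he.measure_preimage hS.nullMeasurableSet]
  rw [hind hA, hind hB, hind hC]
  refine prekopa_leindler ha hb hab _ (measurable_one.indicator (he.measurable hA))
    (measurable_one.indicator (he.measurable hB)) (measurable_one.indicator (he.measurable hC))
    fun x y ↦ ?_
  by_cases hx : e x ∈ A
  · by_cases hy : e y ∈ B
    · simp [Set.indicator, he_add, hx, hy, hABC _ hx _ hy]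
    · simp [Set.indicator, hy, hb]
  · simp [Set.indicator, hx, ha]

end PrekopaLeindler

section Hessian

open scoped Topology

variable {E : Type*} [NormedAddCommGroup E] [InnerProductSpace ℝ E] [CompleteSpace E]
  {H : E → ℝ} {x : E}

/-- The Hessian of a function on a Hilbert space, as the operator differentiating the gradient. -/
def hessian (H : E → ℝ) (x : E) : E →L[ℝ] E := fderiv ℝ (gradient H) x

theorem inner_hessian_left (H : E → ℝ) (x v w : E) :
    ⟪hessian H x v, w⟫ = fderiv ℝ (fderiv ℝ H) x v w := by
  have hgrad : gradient H = (InnerProductSpace.toDual ℝ E).symm ∘ fderiv ℝ H := rfl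
  rw [hessian, hgrad, LinearIsometryEquiv.comp_fderiv]
  exact InnerProductSpace.toDual_symm_apply

theorem inner_hessian_comm (hH : ContDiffAt ℝ 2 H x) (v w : E) :
    ⟪hessian H x v, w⟫ = ⟪v, hessian H x w⟫ := by
  rw [real_inner_comm _ v, inner_hessian_left, inner_hessian_left]
  exact hH.isSymmSndFDerivAt (by simp) v w

theorem contDiffAt_gradient {m : WithTop ℕ∞} (hH : ContDiffAt ℝ (m + 1) H x) :
    ContDiffAt ℝ m (gradient H) x :=
  (InnerProductSpace.toDual ℝ E).symm.toContinuousLinearEquiv.contDiff.contDiffAt.comp x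
    (hH.fderiv_right le_rfl)

theorem hasStrictFDerivAt_gradient (hH : ContDiffAt ℝ 2 H x) :
    HasStrictFDerivAt (gradient H) (hessian H x) x :=
  (contDiffAt_gradient (m := 1) hH).hasStrictFDerivAt one_ne_zero

theorem continuousAt_hessian (hH : ContDiffAt ℝ 2 H x) : ContinuousAt (hessian H) x :=
  ((contDiffAt_gradient (m := 1) hH).fderiv_right (m := 0) (by simp)).continuousAt

theorem hasFDerivAt_taylor_remainder {y z : E} (hx : ContDiffAt ℝ 2 H x)
    (hz : DifferentiableAt ℝ H z) :
    HasFDerivAt (fun z => H z - ⟪gradient H y, z⟫ - 1 / 2 * ⟪hessian H x (z - y), z - y⟫)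
      (innerSL ℝ (gradient H z - gradient H y - hessian H x (z - y))) z := by
  have hsub : HasFDerivAt (fun z : E => z - y) (ContinuousLinearMap.id ℝ E) z :=
    (hasFDerivAt_id z).sub_const y
  have hlin : HasFDerivAt (fun z : E => hessian H x (z - y)) (hessian H x) z :=
    (hessian H x).hasFDerivAt.comp z hsub
  have hquad := (hlin.inner ℝ hsub).const_mul (1 / 2)
  refine ((hz.hasGradientAt.hasFDerivAt.sub (innerSL ℝ (gradient H y)).hasFDerivAt).sub
    hquad).congr_fderiv ?_
  ext v
  have hsymm : ⟪hessian H x v, z - y⟫ = ⟪hessian H x (z - y), v⟫ := by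
    rw [inner_hessian_comm hx, real_inner_comm]
  simp [hsymm, inner_sub_left]
  ring

theorem eventually_abs_taylor_remainder_le (hx : ContDiffAt ℝ 2 H x) {η : ℝ} (hη : 0 < η) :
    ∀ᶠ p : E × E in 𝓝 (x, x),
      |H p.2 - H p.1 - ⟪gradient H p.1, p.2 - p.1⟫ - 1 / 2 * ⟪hessian H x (p.2 - p.1), p.2 - p.1⟫|
        ≤ η * ‖p.2 - p.1‖ ^ 2 := by
  have hstrict := (hasStrictFDerivAt_iff_isLittleO.1 (hasStrictFDerivAt_gradient hx)).def hη
  have hdiff : ∀ᶠ p : E × E in 𝓝 (x, x), DifferentiableAt ℝ H p.1 :=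
    continuous_fst.continuousAt.eventually ((hx.eventually (by simp)).mono
      fun y hy => hy.differentiableAt two_ne_zero)
  obtain ⟨ε, hε, hball⟩ := Metric.eventually_nhds_iff_ball.1 (hstrict.and hdiff)
  refine Metric.eventually_nhds_iff_ball.2 ⟨ε, hε, ?_⟩
  rintro ⟨y, ξ⟩ hp
  rw [← ball_prod_same] at hp hball
  have hseg : segment ℝ y ξ ⊆ ball x ε := (convex_ball x ε).segment_subset hp.1 hp.2
  have hderiv (z : E) (hz : z ∈ segment ℝ y ξ) :=
    hasFDerivAt_taylor_remainder (y := y) hx (hball (z, z) ⟨hseg hz, hseg hz⟩).2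
  have hbound (z : E) (hz : z ∈ segment ℝ y ξ) :
      ‖innerSL ℝ (gradient H z - gradient H y - hessian H x (z - y))‖ ≤ η * ‖ξ - y‖ := by
    rw [innerSL_apply_norm]
    refine (hball (z, y) ⟨hseg hz, hp.1⟩).1.trans ?_
    gcongr
    simpa only [norm_sub_rev] using norm_sub_le_of_mem_segment hz
  have hmvt := (convex_segment y ξ).norm_image_sub_le_of_norm_hasFDerivWithin_le
    (fun z hz => (hderiv z hz).hasFDerivWithinAt) hbound (left_mem_segment ℝ y ξ)
    (right_mem_segment ℝ y ξ)
  convert hmvt using 1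
  · rw [Real.norm_eq_abs]
    congr 1
    simp [inner_sub_right]
    ring
  · ring

end Hessian

section IsPosHomogeneous

open scoped Topology

variable {E : Type*} [NormedAddCommGroup E] [InnerProductSpace ℝ E] {H : E → ℝ} {x : E} {c : ℝ}

/-- Positive homogeneity of degree one, the property singling out, among extensions of a function
from the unit sphere, the one used for support functions. -/
def IsPosHomogeneous (H : E → ℝ) : Prop := ∀ c : ℝ, 0 < c → ∀ x, H (c • x) = c * H x

namespace IsPosHomogeneous

theorem map_zero (hH : IsPosHomogeneous H) : H 0 = 0 := by
  have htwo := hH 2 two_pos 0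
  rw [smul_zero] at htwo
  linarith

variable [CompleteSpace E]

theorem gradient_smul (hH : IsPosHomogeneous H) (hc : 0 < c) (x : E) :
    gradient H (c • x) = gradient H x := by
  have hcomp : (fun z => H (c • z)) = c • H := funext fun z => hH c hc z
  have hfderiv : c • fderiv ℝ H (c • x) = c • fderiv ℝ H x := by
    rw [← fderiv_comp_smul, hcomp, fderiv_const_smul_field, Pi.smul_apply]
  rw [gradient, gradient, smul_right_injective _ hc.ne' hfderiv]

theorem hessian_smul (hH : IsPosHomogeneous H) (hc : 0 < c) (x : E) :
    c • hessian H (c • x) = hessian H x := by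
  rw [hessian, ← fderiv_comp_smul, hessian]
  exact congrArg (fderiv ℝ · x) (funext fun z => hH.gradient_smul hc z)

theorem inner_gradient_self (hH : IsPosHomogeneous H) (hx : DifferentiableAt ℝ H x) :
    ⟪gradient H x, x⟫ = H x := by
  have hray : HasDerivAt (fun t : ℝ => t • x) x 1 := by
    simpa using (hasDerivAt_id (1 : ℝ)).smul_const x
  have hcomp : HasDerivAt (fun t : ℝ => H (t • x)) ⟪gradient H x, x⟫ 1 :=
    hx.hasGradientAt.hasFDerivAt.comp_hasDerivAt_of_eq 1 hray (one_smul ℝ x).symm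
  have hlin : HasDerivAt (fun t : ℝ => t * H x) (H x) 1 := by
    simpa using (hasDerivAt_id (1 : ℝ)).mul_const (H x)
  refine hcomp.unique (hlin.congr_of_eventuallyEq ?_)
  filter_upwards [lt_mem_nhds (zero_lt_one' ℝ)] with t ht using hH t ht x

theorem hessian_self (hH : IsPosHomogeneous H) (hx : ContDiffAt ℝ 2 H x) : hessian H x x = 0 := by
  have hray : HasDerivAt (fun t : ℝ => t • x) x 1 := by
    simpa using (hasDerivAt_id (1 : ℝ)).smul_const x
  have hcomp : HasDerivAt (fun t : ℝ => gradient H (t • x)) (hessian H x x) 1 :=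
    (hasStrictFDerivAt_gradient hx).hasFDerivAt.comp_hasDerivAt_of_eq 1 hray (one_smul ℝ x).symm
  refine hcomp.unique ((hasDerivAt_const (1 : ℝ) (gradient H x)).congr_of_eventuallyEq ?_)
  filter_upwards [lt_mem_nhds (zero_lt_one' ℝ)] with t ht using hH.gradient_smul ht x

theorem inner_gradient_le (hH : IsPosHomogeneous H) (hconv : ConvexOn ℝ Set.univ H)
    (hx : DifferentiableAt ℝ H x) (ξ : E) : ⟪gradient H x, ξ⟫ ≤ H ξ := by
  have hline := hconv.comp_affineMap (AffineMap.lineMap x ξ : ℝ →ᵃ[ℝ] E)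
  have hderiv : HasDerivAt (H ∘ AffineMap.lineMap x ξ) ⟪gradient H x, ξ - x⟫ (0 : ℝ) :=
    hx.hasGradientAt.hasFDerivAt.comp_hasDerivAt_of_eq 0 AffineMap.hasDerivAt_lineMap (by simp)
  have hslope := hline.le_slope_of_hasDerivAt (Set.mem_univ 0) (Set.mem_univ 1) zero_lt_one hderiv
  simp only [slope_def_field, Function.comp_apply, AffineMap.lineMap_apply_one,
    AffineMap.lineMap_apply_zero, inner_sub_right, hH.inner_gradient_self hx, sub_zero,
    div_one] at hslope
  linarith

end IsPosHomogeneous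

theorem gradient_eq_of_forall_inner_le [CompleteSpace E] {X : E} (hx : DifferentiableAt ℝ H x)
    (hle : ∀ v, ⟪X, v⟫ ≤ H v) (heq : ⟪X, x⟫ = H x) : gradient H x = X := by
  have hmin : IsLocalMin (fun v => H v - ⟪X, v⟫) x :=
    Filter.Eventually.of_forall fun v => by simpa [heq] using hle v
  have hderiv := hx.hasGradientAt.hasFDerivAt.sub (innerSL ℝ X).hasFDerivAt
  have hzero := hmin.hasFDerivAt_eq_zero hderiv
  refine ext_inner_right ℝ fun v => ?_
  simpa [sub_eq_zero] using DFunLike.congr_fun hzero v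

end IsPosHomogeneous

section IsC2PlusSupportFunction

open scoped Topology

variable {E : Type*} [NormedAddCommGroup E] [InnerProductSpace ℝ E]

/-- `H` is the support function of a convex body of class `C²₊` with the origin in its interior.
The Hessian of a homogeneous function is degenerate in the radial direction, so its positivity is
required on the other directions only. -/
structure IsC2PlusSupportFunction [CompleteSpace E] (H : E → ℝ) : Prop where
  isPosHomogeneous : IsPosHomogeneous H
  convexOn : ConvexOn ℝ Set.univ H
  contDiffOn : ContDiffOn ℝ 2 H {0}ᶜ
  pos : ∀ x, x ≠ 0 → 0 < H x
  inner_hessian_pos : ∀ x, x ≠ 0 → ∀ v ∉ Submodule.span ℝ {x}, 0 < ⟪hessian H x v, v⟫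

namespace IsC2PlusSupportFunction

section Complete

variable [CompleteSpace E] {H : E → ℝ} (hH : IsC2PlusSupportFunction H) {x : E}
include hH

theorem contDiffAt (hx : x ≠ 0) : ContDiffAt ℝ 2 H x :=
  hH.contDiffOn.contDiffAt (isOpen_compl_singleton.mem_nhds hx)

theorem differentiableAt (hx : x ≠ 0) : DifferentiableAt ℝ H x :=
  (hH.contDiffAt hx).differentiableAt two_ne_zero

theorem hasFDerivAt (hx : x ≠ 0) : HasFDerivAt H (innerSL ℝ (gradient H x)) x :=
  (hH.differentiableAt hx).hasGradientAt.hasFDerivAt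

theorem hasStrictFDerivAt_gradient (hx : x ≠ 0) :
    HasStrictFDerivAt (gradient H) (hessian H x) x :=
  _root_.hasStrictFDerivAt_gradient (hH.contDiffAt hx)

theorem continuousOn : ContinuousOn H {0}ᶜ := hH.contDiffOn.continuousOn

theorem continuousOn_gradient : ContinuousOn (gradient H) {0}ᶜ := fun _ hx =>
  (hH.hasStrictFDerivAt_gradient hx).continuousAt.continuousWithinAt

theorem continuousOn_hessian : ContinuousOn (hessian H) {0}ᶜ := fun _ hx =>
  (continuousAt_hessian (hH.contDiffAt hx)).continuousWithinAt

theorem inner_gradient_self (hx : x ≠ 0) : ⟪gradient H x, x⟫ = H x :=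
  hH.isPosHomogeneous.inner_gradient_self (hH.differentiableAt hx)

theorem gradient_ne_zero (hx : x ≠ 0) : gradient H x ≠ 0 := fun h =>
  (hH.pos x hx).ne' (by rw [← hH.inner_gradient_self hx, h, inner_zero_left])

theorem hessian_self (hx : x ≠ 0) : hessian H x x = 0 :=
  hH.isPosHomogeneous.hessian_self (hH.contDiffAt hx)

theorem inner_hessian_comm (hx : x ≠ 0) (v w : E) :
    ⟪hessian H x v, w⟫ = ⟪v, hessian H x w⟫ :=
  _root_.inner_hessian_comm (hH.contDiffAt hx) v w

theorem inner_gradient_le (hx : x ≠ 0) (ξ : E) : ⟪gradient H x, ξ⟫ ≤ H ξ :=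
  hH.isPosHomogeneous.inner_gradient_le hH.convexOn (hH.differentiableAt hx) ξ

theorem inner_hessian_nonneg (hx : x ≠ 0) (v : E) : 0 ≤ ⟪hessian H x v, v⟫ := by
  by_cases hv : v ∈ Submodule.span ℝ {x}
  · obtain ⟨k, rfl⟩ := Submodule.mem_span_singleton.1 hv
    simp [hH.hessian_self hx]
  · exact (hH.inner_hessian_pos x hx v hv).le

theorem inner_hessian_le_young (hx : x ≠ 0) (w v : E) {a : ℝ} (ha : 0 < a) :
    ⟪w, hessian H x v⟫ ≤ a / 2 * ⟪hessian H x v, v⟫ + ⟪hessian H x w, w⟫ / (2 * a) := by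
  have hsq := hH.inner_hessian_nonneg hx (a • v - w)
  simp only [map_sub, map_smul, inner_sub_left, inner_sub_right, real_inner_smul_left,
    inner_smul_right, hH.inner_hessian_comm hx w v, real_inner_comm w (hessian H x v)] at hsq
  rw [← mul_le_mul_iff_right₀ (show 0 < 2 * a by positivity)]
  field_simp
  linarith

theorem gradient_lineMap_eq {ξ : E} (hx : x ≠ 0) (heq : ⟪gradient H x, ξ⟫ = H ξ) {t : ℝ}
    (ht : t ∈ Set.Icc (0 : ℝ) 1) (hne : AffineMap.lineMap x ξ t ≠ 0) :
    gradient H (AffineMap.lineMap x ξ t) = gradient H x := by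
  refine gradient_eq_of_forall_inner_le (hH.differentiableAt hne) (hH.inner_gradient_le hx)
    (le_antisymm (hH.inner_gradient_le hx _) ?_)
  calc H (AffineMap.lineMap x ξ t) ≤ (1 - t) * H x + t * H ξ := by
        rw [AffineMap.lineMap_apply_module]
        exact hH.convexOn.2 trivial trivial (by linarith [ht.2]) ht.1 (by ring)
    _ = ⟪gradient H x, AffineMap.lineMap x ξ t⟫ := by
        rw [AffineMap.lineMap_apply_module, inner_add_right, inner_smul_right, inner_smul_right,
          heq, hH.inner_gradient_self hx]

theorem inner_gradient_lt {ξ : E} (hx : x ≠ 0) (hξ : ¬SameRay ℝ x ξ) :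
    ⟪gradient H x, ξ⟫ < H ξ := by
  refine (hH.inner_gradient_le hx ξ).lt_of_ne fun heq => hξ ?_
  have hline : HasDerivAt (AffineMap.lineMap x ξ) (ξ - x) (0 : ℝ) := AffineMap.hasDerivAt_lineMap
  have hderiv : HasDerivAt (fun t : ℝ => gradient H (AffineMap.lineMap x ξ t))
      (hessian H x (ξ - x)) 0 :=
    (hH.hasStrictFDerivAt_gradient hx).hasFDerivAt.comp_hasDerivAt_of_eq 0 hline (by simp)
  have hconst : ∀ᶠ t : ℝ in 𝓝[≥] 0, gradient H (AffineMap.lineMap x ξ t) = gradient H x := by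
    filter_upwards [Icc_mem_nhdsGE zero_lt_one, nhdsWithin_le_nhds
      (hline.continuousAt.eventually_ne (by simpa using hx))] with t ht hne
    exact hH.gradient_lineMap_eq hx heq ht hne
  have hzero : hessian H x (ξ - x) = 0 :=
    (uniqueDiffWithinAt_Ici (0 : ℝ)).eq_deriv _ hderiv.hasDerivWithinAt
      ((hasDerivWithinAt_const 0 _ (gradient H x)).congr_of_eventuallyEq hconst (by simp))
  have hspan : ξ - x ∈ Submodule.span ℝ {x} := by
    by_contra hspan
    simpa [hzero] using hH.inner_hessian_pos x hx _ hspan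
  obtain ⟨k, hk⟩ := Submodule.mem_span_singleton.1 hspan
  obtain rfl : ξ = (1 + k) • x := by rw [add_smul, one_smul, hk, add_sub_cancel]
  rcases eq_or_ne ((1 + k) • x) 0 with h0 | h0
  · rw [h0]
    exact SameRay.zero_right x
  · have hpos := hH.pos _ h0
    rw [← heq, inner_smul_right, hH.inner_gradient_self hx] at hpos
    exact SameRay.sameRay_nonneg_smul_right x (pos_of_mul_pos_left hpos (hH.pos x hx).le).le

end Complete

section FiniteDimensional

variable [FiniteDimensional ℝ E] {H : E → ℝ} (hH : IsC2PlusSupportFunction H) {x : E}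
include hH

theorem exists_mul_norm_sq_le (hx : x ≠ 0) :
    ∃ c > 0, ∀ v, c * ‖v‖ ^ 2 ≤ ⟪hessian H x v, v⟫ + ⟪x, v⟫ ^ 2 := by
  have : Nontrivial E := ⟨x, 0, hx⟩
  have hpos (v : E) (hv : v ≠ 0) : 0 < ⟪hessian H x v, v⟫ + ⟪x, v⟫ ^ 2 := by
    by_cases hspan : v ∈ Submodule.span ℝ {x}
    · obtain ⟨k, rfl⟩ := Submodule.mem_span_singleton.1 hspan
      have hk : k ≠ 0 := fun hk => hv (by simp [hk])
      have hinner : ⟪x, k • x⟫ ≠ 0 := by simp [inner_smul_right, hk, hx]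
      exact add_pos_of_nonneg_of_pos (hH.inner_hessian_nonneg hx _) (even_two.pow_pos hinner)
    · exact add_pos_of_pos_of_nonneg (hH.inner_hessian_pos x hx v hspan) (sq_nonneg _)
  obtain ⟨v₀, hv₀, hmin⟩ := (isCompact_sphere (0 : E) 1).exists_isMinOn
    (NormedSpace.sphere_nonempty.2 zero_le_one)
    (f := fun v => ⟪hessian H x v, v⟫ + ⟪x, v⟫ ^ 2) (by fun_prop)
  refine ⟨_, hpos v₀ (ne_zero_of_mem_unit_sphere ⟨v₀, hv₀⟩), fun v => ?_⟩
  rcases eq_or_ne v 0 with rfl | hv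
  · simp
  have hscale := hmin (show ‖v‖⁻¹ • v ∈ sphere (0 : E) 1 by simp [norm_smul, hv])
  simp only [Set.mem_ofPred_eq, map_smul, real_inner_smul_left, inner_smul_right] at hscale
  calc _ ≤ (‖v‖⁻¹ * (‖v‖⁻¹ * ⟪hessian H x v, v⟫) + (‖v‖⁻¹ * ⟪x, v⟫) ^ 2) * ‖v‖ ^ 2 := by gcongr
    _ = _ := by
      have := norm_ne_zero_iff.2 hv
      field_simp

end FiniteDimensional

end IsC2PlusSupportFunction

theorem inner_sub_sq_le_of_norm_eq {x y z : E} (h : ‖y‖ = ‖z‖) :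
    ⟪x, z - y⟫ ^ 2 ≤ ‖x - (1 / 2 : ℝ) • (y + z)‖ ^ 2 * ‖z - y‖ ^ 2 := by
  have horth : ⟪y + z, z - y⟫ = 0 := by
    simp only [inner_sub_right, inner_add_left, real_inner_self_eq_norm_sq, h, real_inner_comm y z]
    ring
  have hx : ⟪x, z - y⟫ = ⟪x - (1 / 2 : ℝ) • (y + z), z - y⟫ := by
    rw [inner_sub_left, real_inner_smul_left, horth, mul_zero, sub_zero]
  rw [hx, ← mul_pow, ← sq_abs]
  gcongr
  exact abs_real_inner_le_norm _ _

namespace IsC2PlusSupportFunction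

variable [FiniteDimensional ℝ E] {H : E → ℝ} (hH : IsC2PlusSupportFunction H) {x : E}
include hH

theorem exists_eventually_mul_norm_sub_sq_le (hx : x ≠ 0) :
    ∃ c > 0, ∀ᶠ p : E × E in 𝓝 (x, x), ‖p.1‖ = ‖p.2‖ →
      c * ‖p.2 - p.1‖ ^ 2 ≤ ⟪hessian H x (p.2 - p.1), p.2 - p.1⟫ := by
  obtain ⟨c, hc, hcoer⟩ := hH.exists_mul_norm_sq_le hx
  have hmid : Filter.Tendsto (fun p : E × E => ‖x - (1 / 2 : ℝ) • (p.1 + p.2)‖ ^ 2)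
      (𝓝 (x, x)) (𝓝 0) := by
    refine Continuous.tendsto' (by fun_prop) _ _ ?_
    simp [← two_smul ℝ x, smul_smul]
  refine ⟨c / 2, by positivity, ?_⟩
  filter_upwards [hmid.eventually (gt_mem_nhds (show 0 < c / 2 by positivity))] with p hp hnorm
  have hchord := inner_sub_sq_le_of_norm_eq (x := x) hnorm
  have := hcoer (p.2 - p.1)
  have : ‖x - (1 / 2 : ℝ) • (p.1 + p.2)‖ ^ 2 * ‖p.2 - p.1‖ ^ 2 ≤ c / 2 * ‖p.2 - p.1‖ ^ 2 := by
    gcongr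
  linarith

end IsC2PlusSupportFunction

end IsC2PlusSupportFunction

section PolarCoordinates

open scoped ENNReal

variable {E : Type*} [NormedAddCommGroup E] [NormedSpace ℝ E]

/-- The open star-shaped set with radial function `s`, punctured at the origin. Only the values
of `s` on the unit sphere matter. -/
def radialSet (s : E → ℝ) : Set E := {y | y ≠ 0 ∧ ‖y‖ < s (‖y‖⁻¹ • y)}

theorem inv_norm_smul_mem_sphere {y : E} (hy : y ≠ 0) : ‖y‖⁻¹ • y ∈ sphere (0 : E) 1 := by
  simp [norm_smul, hy]

theorem isOpen_radialSet {s : E → ℝ} (hs : ContinuousOn s (sphere 0 1)) : IsOpen (radialSet s) := by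
  have hnormalize : ContinuousOn (fun y : E => ‖y‖⁻¹ • y) {0}ᶜ :=
    (continuousOn_id.norm.inv₀ fun y hy => norm_ne_zero_iff.2 hy).smul continuousOn_id
  have hgap : ContinuousOn (fun y : E => s (‖y‖⁻¹ • y) - ‖y‖) {0}ᶜ :=
    (hs.comp hnormalize fun y hy => inv_norm_smul_mem_sphere hy).sub continuousOn_id.norm
  convert hgap.isOpen_inter_preimage isOpen_compl_singleton (isOpen_Ioi (a := (0 : ℝ))) using 1
  ext y
  simp [radialSet]

variable [FiniteDimensional ℝ E] [MeasurableSpace E] [BorelSpace E] (μ : Measure E)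
  [μ.IsAddHaarMeasure]

theorem integrable_toSphere_of_continuousOn {F : Type*} [NormedAddCommGroup F] {g : E → F}
    (hg : ContinuousOn g (sphere 0 1)) :
    Integrable (fun x : sphere (0 : E) 1 => g x) μ.toSphere :=
  hg.domRestrict.integrable_of_hasCompactSupport (.of_compactSpace _)

variable [Nontrivial E]

theorem lintegral_comp_normalize_radialSet {D : E → ℝ≥0∞} {s : E → ℝ}
    (hD : Measurable fun x : sphere (0 : E) 1 => D x) (hs : ContinuousOn s (sphere 0 1))
    (hs₀ : ∀ x ∈ sphere (0 : E) 1, 0 < s x) :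
    ∫⁻ y in radialSet s, D (‖y‖⁻¹ • y) ∂μ =
      ∫⁻ x : sphere (0 : E) 1, D x * ENNReal.ofReal
        (s x ^ Module.finrank ℝ E / Module.finrank ℝ E) ∂μ.toSphere := by
  have hsc : Continuous fun x : sphere (0 : E) 1 => s x := hs.domRestrict
  let A : Set (sphere (0 : E) 1 × Set.Ioi (0 : ℝ)) := {p | p.2.1 < s p.1}
  have hA : MeasurableSet A := measurableSet_lt (by fun_prop) (hsc.measurable.comp measurable_fst)
  have hmeas : Measurable (A.indicator fun p => D p.1) := (hD.comp measurable_fst).indicator hA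
  have hslice (x : sphere (0 : E) 1) :
      ∫⁻ r, A.indicator (fun p => D p.1) (x, r)
          ∂Measure.volumeIoiPow (Module.finrank ℝ E - 1) =
        D x * ENNReal.ofReal (s x ^ Module.finrank ℝ E / Module.finrank ℝ E) := by
    have hind : (fun r => A.indicator (fun p => D p.1) (x, r)) =
        (Set.Iio (⟨s x, hs₀ x x.2⟩ : Set.Ioi (0 : ℝ))).indicator fun _ => D x := by
      ext r
      simp [A, Set.indicator, ← Subtype.coe_lt_coe]
    have hdim : Module.finrank ℝ E - 1 + 1 = Module.finrank ℝ E :=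
      Nat.sub_add_cancel Module.finrank_pos
    rw [hind, lintegral_indicator measurableSet_Iio, lintegral_const, Measure.restrict_apply_univ,
      Measure.volumeIoiPow_apply_Iio, ← Nat.cast_add_one, hdim]
  have hpull (y : ({0}ᶜ : Set E)) :
      A.indicator (fun p => D p.1) (homeomorphUnitSphereProd E y) =
        (radialSet s).indicator (fun y => D (‖y‖⁻¹ • y)) y := by
    have hy : (y : E) ≠ 0 := y.2
    simp [A, radialSet, Set.indicator, hy]
  calc ∫⁻ y in radialSet s, D (‖y‖⁻¹ • y) ∂μ
      = ∫⁻ y : ({0}ᶜ : Set E), A.indicator (fun p => D p.1) (homeomorphUnitSphereProd E y)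
          ∂μ.comap Subtype.val := by
        simp_rw [hpull]
        rw [lintegral_subtype_comap (measurableSet_singleton _).compl, restrict_compl_singleton,
          lintegral_indicator (isOpen_radialSet hs).measurableSet]
    _ = _ := by
        rw [μ.measurePreserving_homeomorphUnitSphereProd.lintegral_comp hmeas,
          lintegral_prod _ hmeas.aemeasurable]
        simp_rw [hslice]

theorem integral_comp_normalize_mul_comp_norm (g : E → ℝ) (k : ℝ → ℝ) :
    ∫ y, g (‖y‖⁻¹ • y) * k ‖y‖ ∂μ = (∫ x : sphere (0 : E) 1, g x ∂μ.toSphere) *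
      ∫ r : Set.Ioi (0 : ℝ), k r ∂Measure.volumeIoiPow (Module.finrank ℝ E - 1) :=
  calc ∫ y, g (‖y‖⁻¹ • y) * k ‖y‖ ∂μ
      = ∫ y : ({0}ᶜ : Set E), g (‖y.1‖⁻¹ • y.1) * k ‖y.1‖ ∂μ.comap Subtype.val := by
        rw [integral_subtype_comap (measurableSet_singleton _).compl
          (fun y => g (‖y‖⁻¹ • y) * k ‖y‖), restrict_compl_singleton]
    _ = ∫ z : sphere (0 : E) 1 × Set.Ioi (0 : ℝ), g z.1 * k z.2
          ∂μ.toSphere.prod (.volumeIoiPow (Module.finrank ℝ E - 1)) := by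
        simpa using μ.measurePreserving_homeomorphUnitSphereProd.integral_comp
          (Homeomorph.measurableEmbedding _) (fun z => g z.1 * k z.2)
    _ = _ := integral_prod_mul (fun x : sphere (0 : E) 1 => g x) fun r : Set.Ioi (0 : ℝ) => k r

end PolarCoordinates

section ConeMap

variable {E : Type*} [NormedAddCommGroup E] [InnerProductSpace ℝ E] [CompleteSpace E]

/-- The homogeneous extension of the inverse Gauss map `∇H`. It carries the open unit ball onto
the interior of the convex body with support function `H`, apart from the origin. -/
def coneMap (H : E → ℝ) (y : E) : E := ‖y‖ • gradient H y

/-- The derivative of `coneMap H` at every point of the ray through the unit vector `x`. -/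
def coneMapDeriv (H : E → ℝ) (x : E) : E →L[ℝ] E :=
  hessian H x + (innerSL ℝ x).smulRight (gradient H x)

/-- The density `h σ_n` of the cone-volume measure with respect to the spherical measure,
obtained as the Jacobian of `coneMap H`. -/
def coneDensity (H : E → ℝ) (x : E) : ℝ := |(coneMapDeriv H x).det|

namespace IsC2PlusSupportFunction

variable {H : E → ℝ} (hH : IsC2PlusSupportFunction H) {x y : E}
include hH

theorem hasFDerivAt_coneMap (hy : y ≠ 0) :
    HasFDerivAt (coneMap H) (coneMapDeriv H (‖y‖⁻¹ • y)) y := by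
  have hnorm : HasFDerivAt (fun z : E => ‖z‖) (‖y‖⁻¹ • innerSL ℝ y) y := by
    have hsqrt := (hasStrictFDerivAt_norm_sq y).hasFDerivAt.sqrt (by positivity)
    simp only [Real.sqrt_sq (norm_nonneg _)] at hsqrt
    refine hsqrt.congr_fderiv ?_
    ext v
    simp
    field_simp
  refine (hnorm.smul (hH.hasStrictFDerivAt_gradient hy).hasFDerivAt).congr_fderiv ?_
  have hinv : 0 < ‖y‖⁻¹ := inv_pos.2 (norm_pos_iff.2 hy)
  ext v
  simp [coneMapDeriv, ← hH.isPosHomogeneous.hessian_smul hinv y,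
    hH.isPosHomogeneous.gradient_smul hinv, smul_smul, hy]

theorem norm_lt_norm_of_coneMap_eq (hx : x ≠ 0) (hy : y ≠ 0) (hxy : ¬SameRay ℝ x y)
    (h : coneMap H x = coneMap H y) : ‖y‖ < ‖x‖ := by
  have hinner := congrArg (fun v => ⟪v, y⟫) h
  simp only [coneMap, real_inner_smul_left, hH.inner_gradient_self hy] at hinner
  have hlt := mul_lt_mul_of_pos_left (hH.inner_gradient_lt hx hxy) (norm_pos_iff.2 hx)
  exact lt_of_mul_lt_mul_right (hinner ▸ hlt) (hH.pos y hy).le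

theorem injOn_coneMap : Set.InjOn (coneMap H) {0}ᶜ := by
  intro x hx y hy h
  by_cases hxy : SameRay ℝ x y
  · obtain ⟨c, hc, rfl⟩ := hxy.exists_pos_left hx hy
    rw [coneMap, coneMap, hH.isPosHomogeneous.gradient_smul hc] at h
    exact (sameRay_iff_of_norm_eq (smul_left_injective ℝ (hH.gradient_ne_zero hx) h)).1 hxy
  · exact absurd (hH.norm_lt_norm_of_coneMap_eq hx hy hxy h)
      (hH.norm_lt_norm_of_coneMap_eq hy hx (mt SameRay.symm hxy) h.symm).asymm

theorem inner_coneMap_lt {s : E → ℝ} {ξ : E} {a : ℝ} (ha : 0 < a)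
    (hs : ∀ x ∈ sphere (0 : E) 1, s x * ⟪gradient H x, ξ⟫ ≤ a) (hy : y ∈ radialSet s) :
    ⟪coneMap H y, ξ⟫ < a := by
  have hinv : 0 < ‖y‖⁻¹ := inv_pos.2 (norm_pos_iff.2 hy.1)
  rw [coneMap, ← hH.isPosHomogeneous.gradient_smul hinv, real_inner_smul_left]
  rcases le_or_gt ⟪gradient H (‖y‖⁻¹ • y), ξ⟫ 0 with hle | hgt
  · exact (mul_nonpos_of_nonneg_of_nonpos (norm_nonneg y) hle).trans_lt ha
  · exact (mul_lt_mul_of_pos_right hy.2 hgt).trans_le (hs _ (inv_norm_smul_mem_sphere hy.1))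

end IsC2PlusSupportFunction

end ConeMap

section Jacobian

variable {E : Type*} [NormedAddCommGroup E] [InnerProductSpace ℝ E] [FiniteDimensional ℝ E]

namespace IsC2PlusSupportFunction

variable {H : E → ℝ} (hH : IsC2PlusSupportFunction H) {x y : E}
include hH

theorem coneMapDeriv_eq_transvection_comp (hx : x ∈ sphere (0 : E) 1) :
    (coneMapDeriv H x : E →ₗ[ℝ] E) =
      LinearMap.transvection (innerₗ E x) ((H x)⁻¹ • (gradient H x - H x • x)) ∘ₗ
        ((hessian H x + (H x • innerSL ℝ x).smulRight x : E →L[ℝ] E) : E →ₗ[ℝ] E) := by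
  have hx₀ : x ≠ 0 := ne_of_mem_sphere hx one_ne_zero
  have hx₁ : ‖x‖ = 1 := mem_sphere_zero_iff_norm.1 hx
  have hHx : H x ≠ 0 := (hH.pos x hx₀).ne'
  ext v
  have hradial : ⟪x, hessian H x v⟫ = 0 := by
    rw [← hH.inner_hessian_comm hx₀, hH.hessian_self hx₀, inner_zero_left]
  simp only [coneMapDeriv, LinearMap.comp_apply, LinearMap.transvection.apply, _root_.add_apply,
    ContinuousLinearMap.coe_coe, innerₗ_apply_apply, ContinuousLinearMap.smulRight_apply,
    _root_.smul_apply, innerSL_apply_apply, smul_eq_mul, inner_add_right, inner_smul_right,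
    hradial, real_inner_self_eq_norm_sq, hx₁, smul_smul]
  match_scalars <;> field_simp <;> ring

theorem det_coneMapDeriv (hx : x ∈ sphere (0 : E) 1) :
    (coneMapDeriv H x).det = (hessian H x + (H x • innerSL ℝ x).smulRight x).det := by
  have hx₀ : x ≠ 0 := ne_of_mem_sphere hx one_ne_zero
  have horth : innerₗ E x ((H x)⁻¹ • (gradient H x - H x • x)) = 0 := by
    rw [innerₗ_apply_apply, inner_smul_right, inner_sub_right, inner_smul_right, real_inner_comm,
      hH.inner_gradient_self hx₀, real_inner_self_eq_norm_sq, mem_sphere_zero_iff_norm.1 hx]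
    ring
  rw [ContinuousLinearMap.det, hH.coneMapDeriv_eq_transvection_comp hx, LinearMap.det_comp,
    LinearMap.transvection.det, horth, add_zero, one_mul, ContinuousLinearMap.det]

theorem continuousOn_coneDensity : ContinuousOn (coneDensity H) (sphere 0 1) := by
  have hsub : sphere (0 : E) 1 ⊆ {0}ᶜ := fun x hx => ne_of_mem_sphere hx one_ne_zero
  have hrank : ContinuousOn (fun x => (innerSL ℝ x).smulRight (gradient H x)) (sphere (0 : E) 1) :=
    ((ContinuousLinearMap.smulRightL ℝ E E).continuous.comp (innerSL ℝ).continuous).continuousOn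
      |>.clm_apply (hH.continuousOn_gradient.mono hsub)
  exact (ContinuousLinearMap.continuous_det.comp_continuousOn
    ((hH.continuousOn_hessian.mono hsub).add hrank)).abs

theorem exists_inner_eq_mul_and_forall_inner_le (hy : y ≠ 0) :
    ∃ x ∈ sphere (0 : E) 1, ∃ m > 0, ⟪y, x⟫ = m * H x ∧ ∀ v, ⟪y, v⟫ ≤ m * H v := by
  have hcont : ContinuousOn (fun ξ => ⟪y, ξ⟫ / H ξ) (sphere (0 : E) 1) :=
    ContinuousOn.div (by fun_prop)
      (hH.continuousOn.mono fun x hx => ne_of_mem_sphere hx one_ne_zero)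
      fun ξ hξ => (hH.pos ξ (ne_of_mem_sphere hξ one_ne_zero)).ne'
  obtain ⟨x, hx, hmax⟩ := (isCompact_sphere (0 : E) 1).exists_isMaxOn
    ⟨_, inv_norm_smul_mem_sphere hy⟩ hcont
  have hle (v : E) (hv : v ≠ 0) : ⟪y, v⟫ / H v ≤ ⟪y, x⟫ / H x := by
    have hscaled : ⟪y, ‖v‖⁻¹ • v⟫ / H (‖v‖⁻¹ • v) ≤ ⟪y, x⟫ / H x :=
      hmax (inv_norm_smul_mem_sphere hv)
    have hv' : ‖v‖⁻¹ ≠ 0 := inv_ne_zero (norm_ne_zero_iff.2 hv)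
    rwa [inner_smul_right, hH.isPosHomogeneous _ (by positivity),
      mul_div_mul_left _ _ hv'] at hscaled
  have hpos : 0 < ⟪y, x⟫ / H x :=
    (div_pos (real_inner_self_pos.2 hy) (hH.pos y hy)).trans_le (hle y hy)
  refine ⟨x, hx, ⟪y, x⟫ / H x, hpos,
    (div_mul_cancel₀ _ (hH.pos x (ne_of_mem_sphere hx one_ne_zero)).ne').symm, fun v => ?_⟩
  rcases eq_or_ne v 0 with rfl | hv
  · rw [inner_zero_right, hH.isPosHomogeneous.map_zero, mul_zero]
  · exact (div_le_iff₀ (hH.pos v hv)).1 (hle v hv)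

theorem mem_coneMap_image_radialSet_one (hy : y ≠ 0) (hlt : ∀ ξ ∈ sphere (0 : E) 1, ⟪y, ξ⟫ < H ξ) :
    y ∈ coneMap H '' radialSet fun _ => 1 := by
  obtain ⟨x, hx, m, hm, heq, hle⟩ := hH.exists_inner_eq_mul_and_forall_inner_le hy
  have hx₀ : x ≠ 0 := ne_of_mem_sphere hx one_ne_zero
  have hnorm : ‖m • x‖ = m := by
    rw [norm_smul, mem_sphere_zero_iff_norm.1 hx, Real.norm_of_nonneg hm.le, mul_one]
  have hm₁ : m < 1 := by
    have hxlt := hlt x hx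
    rw [heq] at hxlt
    exact (mul_lt_iff_lt_one_left (hH.pos x hx₀)).1 hxlt
  have hgrad : gradient H x = m⁻¹ • y := by
    refine gradient_eq_of_forall_inner_le (hH.differentiableAt hx₀) (fun v => ?_) ?_
    · rw [real_inner_smul_left, inv_mul_le_iff₀ hm]
      exact hle v
    · rw [real_inner_smul_left, heq, inv_mul_cancel_left₀ hm.ne']
  refine ⟨m • x, ⟨smul_ne_zero hm.ne' hx₀, by rwa [hnorm]⟩, ?_⟩
  rw [coneMap, hnorm, hH.isPosHomogeneous.gradient_smul hm, hgrad, smul_inv_smul₀ hm.ne']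

variable [MeasurableSpace E] [BorelSpace E]

theorem measurableSet_coneMap_image_radialSet {s : E → ℝ} (hs : ContinuousOn s (sphere 0 1)) :
    MeasurableSet (coneMap H '' radialSet s) :=
  measurable_image_of_fderivWithin (isOpen_radialSet hs).measurableSet
    (fun _ hy => (hH.hasFDerivAt_coneMap hy.1).hasFDerivWithinAt)
    (hH.injOn_coneMap.mono fun _ hy => hy.1)

variable [Nontrivial E]

theorem volume_mul_volume_coneMap_image_radialSet_le_sq {s t a b : E → ℝ}
    (hs : ContinuousOn s (sphere 0 1)) (ht : ContinuousOn t (sphere 0 1))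
    (ha : ∀ ξ ∈ sphere (0 : E) 1, 0 < a ξ) (hb : ∀ ξ ∈ sphere (0 : E) 1, 0 < b ξ)
    (hab : ∀ ξ ∈ sphere (0 : E) 1, a ξ + b ξ ≤ 2 * H ξ)
    (hsa : ∀ x ∈ sphere (0 : E) 1, ∀ ξ ∈ sphere (0 : E) 1, s x * ⟪gradient H x, ξ⟫ ≤ a ξ)
    (htb : ∀ x ∈ sphere (0 : E) 1, ∀ ξ ∈ sphere (0 : E) 1, t x * ⟪gradient H x, ξ⟫ ≤ b ξ) :
    volume (coneMap H '' radialSet s) * volume (coneMap H '' radialSet t) ≤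
      volume (coneMap H '' radialSet fun _ => 1) ^ 2 := by
  have hmeas := hH.measurableSet_coneMap_image_radialSet (s := fun _ => 1) continuousOn_const
  have hroot := brunn_minkowski (a := 1 / 2) (b := 1 / 2) (by positivity) (by positivity)
    (add_halves 1) (hH.measurableSet_coneMap_image_radialSet hs)
    (hH.measurableSet_coneMap_image_radialSet ht) (hmeas.insert 0) ?_
  · rw [measure_congr (insert_ae_eq_self (0 : E) _),
      ← ENNReal.mul_rpow_of_nonneg _ _ (NNReal.coe_nonneg _)] at hroot
    have hsq := ENNReal.rpow_le_rpow hroot (zero_le_two (α := ℝ))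
    rw [← ENNReal.rpow_mul] at hsq
    simpa using hsq
  · rintro _ ⟨y, hy, rfl⟩ _ ⟨z, hz, rfl⟩
    refine or_iff_not_imp_left.2 fun h₀ => hH.mem_coneMap_image_radialSet_one h₀ fun ξ hξ => ?_
    have hyξ := hH.inner_coneMap_lt (ha ξ hξ) (fun x hx => hsa x hx ξ hξ) hy
    have hzξ := hH.inner_coneMap_lt (hb ξ hξ) (fun x hx => htb x hx ξ hξ) hz
    simp only [inner_add_left, NNReal.smul_def, real_inner_smul_left]
    push_cast
    linarith [hab ξ hξ]

theorem volume_coneMap_image_radialSet {s : E → ℝ} (hs : ContinuousOn s (sphere 0 1))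
    (hs₀ : ∀ x ∈ sphere (0 : E) 1, 0 < s x) :
    volume (coneMap H '' radialSet s) = ENNReal.ofReal
      ((∫ x : sphere (0 : E) 1, coneDensity H x * s x ^ Module.finrank ℝ E ∂volume.toSphere) /
        Module.finrank ℝ E) := by
  have hD : Continuous fun x : sphere (0 : E) 1 => coneDensity H x :=
    hH.continuousOn_coneDensity.domRestrict
  have hs_nonneg (x : sphere (0 : E) 1) :
      0 ≤ s x ^ Module.finrank ℝ E / Module.finrank ℝ E :=
    div_nonneg (pow_nonneg (hs₀ x x.2).le _) (Nat.cast_nonneg _)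
  have hint : Integrable (fun x : sphere (0 : E) 1 =>
      coneDensity H x * (s x ^ Module.finrank ℝ E / Module.finrank ℝ E)) volume.toSphere :=
    integrable_toSphere_of_continuousOn volume (hH.continuousOn_coneDensity.mul
      ((hs.pow _).div_const _))
  rw [← lintegral_abs_det_fderiv_eq_addHaar_image volume (isOpen_radialSet hs).measurableSet
      (fun y hy => (hH.hasFDerivAt_coneMap hy.1).hasFDerivWithinAt)
      (hH.injOn_coneMap.mono fun y hy => hy.1)]
  change ∫⁻ y in radialSet s, ENNReal.ofReal (coneDensity H (‖y‖⁻¹ • y)) = _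
  rw [lintegral_comp_normalize_radialSet volume (D := fun x => ENNReal.ofReal (coneDensity H x))
      hD.measurable.ennreal_ofReal hs hs₀, ← integral_div]
  simp only [mul_div_assoc]
  rw [ofReal_integral_eq_lintegral_ofReal hint
    (.of_forall fun x => mul_nonneg (abs_nonneg _) (hs_nonneg x))]
  exact lintegral_congr fun x => (ENNReal.ofReal_mul (abs_nonneg _)).symm

theorem integral_mul_integral_le_sq {s t a b : E → ℝ}
    (hs : ContinuousOn s (sphere 0 1)) (ht : ContinuousOn t (sphere 0 1))
    (hs₀ : ∀ x ∈ sphere (0 : E) 1, 0 < s x) (ht₀ : ∀ x ∈ sphere (0 : E) 1, 0 < t x)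
    (ha : ∀ ξ ∈ sphere (0 : E) 1, 0 < a ξ) (hb : ∀ ξ ∈ sphere (0 : E) 1, 0 < b ξ)
    (hab : ∀ ξ ∈ sphere (0 : E) 1, a ξ + b ξ ≤ 2 * H ξ)
    (hsa : ∀ x ∈ sphere (0 : E) 1, ∀ ξ ∈ sphere (0 : E) 1, s x * ⟪gradient H x, ξ⟫ ≤ a ξ)
    (htb : ∀ x ∈ sphere (0 : E) 1, ∀ ξ ∈ sphere (0 : E) 1, t x * ⟪gradient H x, ξ⟫ ≤ b ξ) :
    (∫ x : sphere (0 : E) 1, coneDensity H x * s x ^ Module.finrank ℝ E ∂volume.toSphere) *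
        (∫ x : sphere (0 : E) 1, coneDensity H x * t x ^ Module.finrank ℝ E ∂volume.toSphere) ≤
      (∫ x : sphere (0 : E) 1, coneDensity H x ∂volume.toSphere) ^ 2 := by
  have hbm := hH.volume_mul_volume_coneMap_image_radialSet_le_sq hs ht ha hb hab hsa htb
  have hnonneg (u : E → ℝ) (hu : ∀ x ∈ sphere (0 : E) 1, 0 < u x) : 0 ≤ ∫ x : sphere (0 : E) 1,
      coneDensity H x * u x ^ Module.finrank ℝ E ∂volume.toSphere :=
    integral_nonneg fun x => mul_nonneg (abs_nonneg _) (pow_nonneg (hu x x.2).le _)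
  have hdim : (0 : ℝ) < Module.finrank ℝ E := Nat.cast_pos.2 Module.finrank_pos
  have h1 := hnonneg (fun _ => 1) fun _ _ => one_pos
  rw [hH.volume_coneMap_image_radialSet hs hs₀, hH.volume_coneMap_image_radialSet ht ht₀,
    hH.volume_coneMap_image_radialSet continuousOn_const fun _ _ => one_pos,
    ← ENNReal.ofReal_mul (div_nonneg (hnonneg s hs₀) hdim.le),
    ← ENNReal.ofReal_pow (div_nonneg h1 hdim.le), ENNReal.ofReal_le_ofReal_iff (by positivity),
    div_mul_div_comm, div_pow, ← sq, div_le_div_iff_of_pos_right (by positivity)] at hbm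
  simpa only [one_pow, mul_one] using hbm

end IsC2PlusSupportFunction

end Jacobian

section LocalBrunnMinkowski

open scoped Topology

variable {E : Type*} [NormedAddCommGroup E] [InnerProductSpace ℝ E] [FiniteDimensional ℝ E]
  {H f Q : E → ℝ} {w : E → E} {x ξ v : E}

theorem exists_young_constants {h g q : ℝ} (hh : 0 < h) (hq : h * g / 2 < q) :
    ∃ a > 0, ∃ A > a / 2, ∃ B > g / (2 * a), ∃ θ < 1 / 2, h * A < θ ∧ B < q := by
  have htendsto : Filter.Tendsto (fun a : ℝ => g / (2 * a)) (𝓝[<] h⁻¹) (𝓝 (h * g / 2)) := by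
    have hcont : ContinuousAt (fun a : ℝ => g / (2 * a)) h⁻¹ := by
      fun_prop (disch := positivity)
    convert hcont.tendsto.mono_left nhdsWithin_le_nhds using 2
    field_simp
  have hmem : ∀ᶠ a in 𝓝[<] h⁻¹, a ∈ Set.Ioo 0 h⁻¹ := Ioo_mem_nhdsLT (inv_pos.2 hh)
  obtain ⟨a, ⟨ha, ha'⟩, hga⟩ := (hmem.and (htendsto.eventually_lt_const hq)).exists
  obtain ⟨A, hA, hA'⟩ := exists_between (div_lt_div_of_pos_right ha' two_pos)
  obtain ⟨B, hB, hB'⟩ := exists_between hga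
  have hhA : h * A < 1 / 2 := by
    calc h * A < h * (h⁻¹ / 2) := by gcongr
      _ = 1 / 2 := by field_simp
  obtain ⟨θ, hθ, hθ'⟩ := exists_between hhA
  exact ⟨a, ha, A, hA, B, hB, θ, hθ', hθ, hB'⟩

namespace IsC2PlusSupportFunction

variable (hH : IsC2PlusSupportFunction H)
include hH

theorem eventually_mul_inner_hessian_le_sub_inner_gradient (hx : x ≠ 0) {θ : ℝ} (hθ : θ < 1 / 2) :
    ∀ᶠ p : E × E in 𝓝 (x, x), ‖p.1‖ = ‖p.2‖ →
      θ * ⟪hessian H x (p.2 - p.1), p.2 - p.1⟫ ≤ H p.2 - ⟪gradient H p.1, p.2⟫ := by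
  obtain ⟨c, hc, hlower⟩ := hH.exists_eventually_mul_norm_sub_sq_le hx
  have htaylor := eventually_abs_taylor_remainder_le (hH.contDiffAt hx)
    (mul_pos (sub_pos.2 hθ) hc)
  have hfst : ∀ᶠ p : E × E in 𝓝 (x, x), p.1 ≠ 0 := continuousAt_fst.eventually_ne hx
  filter_upwards [hlower, htaylor, hfst] with p hlow htay hp hnorm
  have hrem := (abs_le.1 htay).1
  rw [inner_sub_right, hH.inner_gradient_self hp] at hrem
  have hscaled := mul_le_mul_of_nonneg_left (hlow hnorm) (sub_pos.2 hθ).le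
  linarith

theorem eventually_mul_sub_le (hx : x ≠ 0)
    (hf : HasStrictFDerivAt f ((innerSL ℝ v).comp (hessian H x)) x) {a A B : ℝ} (ha : 0 < a)
    (hA : a / 2 < A) (hB : ⟪hessian H x v, v⟫ / (2 * a) < B) :
    ∀ᶠ p : E × E in 𝓝 (x, x), ‖p.1‖ = ‖p.2‖ → ∀ ε > 0,
      ε * (f p.1 - f p.2) ≤ A * ⟪hessian H x (p.2 - p.1), p.2 - p.1⟫ + ε ^ 2 * B := by
  obtain ⟨c, hc, hlower⟩ := hH.exists_eventually_mul_norm_sub_sq_le hx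
  set g := ⟪hessian H x v, v⟫
  have hη : 0 < min ((A - a / 2) * c) (B - g / (2 * a)) :=
    lt_min (mul_pos (sub_pos.2 hA) hc) (sub_pos.2 hB)
  have hstrict := (hasStrictFDerivAt_iff_isLittleO.1 hf).def hη
  filter_upwards [hlower, hstrict] with p hlow hdiff hnorm ε hε
  set η := min ((A - a / 2) * c) (B - g / (2 * a))
  have hsymm : ⟪hessian H x (p.2 - p.1), p.2 - p.1⟫ = ⟪hessian H x (p.1 - p.2), p.1 - p.2⟫ := by
    rw [← neg_sub p.1, map_neg, inner_neg_neg]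
  have hlow' := hlow hnorm
  rw [norm_sub_rev, hsymm] at hlow'
  rw [hsymm]
  set d := p.1 - p.2
  have hlinear : f p.1 - f p.2 ≤ ⟪v, hessian H x d⟫ + η * ‖d‖ := by
    have hupper : f p.1 - f p.2 - ⟪v, hessian H x d⟫ ≤ η * ‖d‖ := (abs_le.1 hdiff).2
    linarith
  have hyoung := hH.inner_hessian_le_young hx v d (div_pos ha hε)
  have hcross : η * (ε * ‖d‖) ≤ (A - a / 2) * ⟪hessian H x d, d⟫ + (B - g / (2 * a)) * ε ^ 2 :=
    calc η * (ε * ‖d‖) ≤ η * (‖d‖ ^ 2 + ε ^ 2) := by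
          gcongr
          nlinarith [two_mul_le_add_sq ε ‖d‖, mul_nonneg hε.le (norm_nonneg d)]
      _ = η * ‖d‖ ^ 2 + η * ε ^ 2 := mul_add ..
      _ ≤ (A - a / 2) * c * ‖d‖ ^ 2 + (B - g / (2 * a)) * ε ^ 2 := by
          gcongr
          exacts [min_le_left .., min_le_right ..]
      _ ≤ _ := by
          rw [mul_assoc]
          gcongr
  calc ε * (f p.1 - f p.2)
      ≤ ε * (a / ε / 2 * ⟪hessian H x d, d⟫ + g / (2 * (a / ε)) + η * ‖d‖) := by
        gcongr
        linarith
    _ = a / 2 * ⟪hessian H x d, d⟫ + g / (2 * a) * ε ^ 2 + η * (ε * ‖d‖) := by field_simp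
    _ ≤ _ := by linarith

theorem eventually_perturbed_inner_gradient_le_diag (hx : x ≠ 0)
    (hf : HasStrictFDerivAt f ((innerSL ℝ v).comp (hessian H x)) x) (hQ : ContinuousAt Q x)
    (hlt : H x * ⟪hessian H x v, v⟫ / 2 < Q x) :
    ∀ᶠ z : ℝ × E × E in 𝓝 (0, x, x), 0 < z.1 → ‖z.2.1‖ = ‖z.2.2‖ →
      (1 + (z.1 * f z.2.1 - z.1 ^ 2 * Q z.2.1)) * ⟪gradient H z.2.1, z.2.2⟫ ≤
        H z.2.2 * (1 + z.1 * f z.2.2) := by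
  obtain ⟨a, ha, A, hA, B, hB, θ, hθ, hHA, hBQ⟩ := exists_young_constants (hH.pos x hx) hlt
  have hfc := hf.continuousAt
  have hHc := (hH.differentiableAt hx).continuousAt
  have hHz : ContinuousAt (fun z : ℝ × E × E => H z.2.2) (0, x, x) := by fun_prop
  have hQz : ContinuousAt (fun z : ℝ × E × E => Q z.2.1) (0, x, x) := by fun_prop
  have hs : ContinuousAt (fun z : ℝ × E × E => 1 + (z.1 * f z.2.1 - z.1 ^ 2 * Q z.2.1))
      (0, x, x) := by fun_prop
  have hs_pos : ∀ᶠ z : ℝ × E × E in 𝓝 (0, x, x), 0 < 1 + (z.1 * f z.2.1 - z.1 ^ 2 * Q z.2.1) :=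
    continuousAt_const.eventually_lt hs (by simp)
  filter_upwards [continuousAt_snd.eventually
      (hH.eventually_mul_inner_hessian_le_sub_inner_gradient hx hθ),
    continuousAt_snd.eventually (hH.eventually_mul_sub_le hx hf ha hA hB),
    (hHz.mul_const A).eventually_lt (hs.mul_const θ) (by simpa using hHA),
    hQz.eventually_const_lt hBQ, hs_pos, hHz.eventually_const_lt (hH.pos x hx)]
    with ⟨ε, y, ξ⟩ hgap hdiff hHs hBz hs₀ hH₀ hε hnorm
  dsimp only at hgap hdiff hHs hBz hs₀ hH₀ hε hnorm ⊢
  have he : 0 ≤ ⟪hessian H x (ξ - y), ξ - y⟫ := hH.inner_hessian_nonneg hx _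
  set s := 1 + (ε * f y - ε ^ 2 * Q y)
  set e := ⟪hessian H x (ξ - y), ξ - y⟫
  suffices hmain : H ξ * (ε * (f y - f ξ)) - H ξ * (ε ^ 2 * Q y) ≤ s * (H ξ - ⟪gradient H y, ξ⟫) by
    linear_combination hmain
  calc H ξ * (ε * (f y - f ξ)) - H ξ * (ε ^ 2 * Q y)
      ≤ H ξ * (A * e + ε ^ 2 * B) - H ξ * (ε ^ 2 * B) := by
        gcongr
        exact hdiff hnorm ε hε
    _ = H ξ * A * e := by ring
    _ ≤ s * θ * e := by gcongr
    _ = s * (θ * e) := mul_assoc ..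
    _ ≤ s * (H ξ - ⟪gradient H y, ξ⟫) := by
        gcongr
        exact hgap hnorm

theorem eventually_perturbed_inner_gradient_le_off_diag (hx : x ≠ 0) (hξ : ¬SameRay ℝ x ξ)
    (hfx : ContinuousAt f x) (hfξ : ContinuousAt f ξ) (hQ : ContinuousAt Q x) :
    ∀ᶠ z : ℝ × E × E in 𝓝 (0, x, ξ),
      (1 + (z.1 * f z.2.1 - z.1 ^ 2 * Q z.2.1)) * ⟪gradient H z.2.1, z.2.2⟫ ≤
        H z.2.2 * (1 + z.1 * f z.2.2) := by
  have hξ₀ : ξ ≠ 0 := by rintro rfl; exact hξ (.zero_right x)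
  have hHc := (hH.differentiableAt hξ₀).continuousAt
  have hgc := (hH.hasStrictFDerivAt_gradient hx).continuousAt
  have hl : ContinuousAt (fun z : ℝ × E × E =>
      (1 + (z.1 * f z.2.1 - z.1 ^ 2 * Q z.2.1)) * ⟪gradient H z.2.1, z.2.2⟫) (0, x, ξ) := by
    fun_prop
  have hr : ContinuousAt (fun z : ℝ × E × E => H z.2.2 * (1 + z.1 * f z.2.2)) (0, x, ξ) := by
    fun_prop
  exact (hl.eventually_lt hr (by simpa using hH.inner_gradient_lt hx hξ)).mono fun _ => le_of_lt

theorem eventually_forall_perturbed_inner_gradient_le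
    (hf : ∀ x ∈ sphere (0 : E) 1, HasStrictFDerivAt f ((innerSL ℝ (w x)).comp (hessian H x)) x)
    (hQ : ∀ x ∈ sphere (0 : E) 1, ContinuousAt Q x)
    (hlt : ∀ x ∈ sphere (0 : E) 1, H x * ⟪hessian H x (w x), w x⟫ / 2 < Q x) :
    ∀ᶠ ε : ℝ in 𝓝[>] 0, ∀ x ∈ sphere (0 : E) 1, ∀ ξ ∈ sphere (0 : E) 1,
      (1 + (ε * f x - ε ^ 2 * Q x)) * ⟪gradient H x, ξ⟫ ≤ H ξ * (1 + ε * f ξ) := by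
  have hlocal : ∀ p ∈ sphere (0 : E) 1 ×ˢ sphere (0 : E) 1,
      ∀ᶠ z : ℝ × E × E in 𝓝 (0, p), 0 < z.1 → ‖z.2.1‖ = ‖z.2.2‖ →
        (1 + (z.1 * f z.2.1 - z.1 ^ 2 * Q z.2.1)) * ⟪gradient H z.2.1, z.2.2⟫ ≤
          H z.2.2 * (1 + z.1 * f z.2.2) := by
    rintro ⟨x, ξ⟩ ⟨hx, hξ⟩
    have hx₀ : x ≠ 0 := ne_of_mem_sphere hx one_ne_zero
    rcases eq_or_ne x ξ with rfl | hne
    · exact hH.eventually_perturbed_inner_gradient_le_diag hx₀ (hf x hx) (hQ x hx) (hlt x hx)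
    · have hray : ¬SameRay ℝ x ξ := by
        rwa [sameRay_iff_of_norm_eq ((mem_sphere_zero_iff_norm.1 hx).trans
          (mem_sphere_zero_iff_norm.1 hξ).symm)]
      exact (hH.eventually_perturbed_inner_gradient_le_off_diag hx₀ hray (hf x hx).continuousAt
        (hf ξ hξ).continuousAt (hQ x hx)).mono fun _ hz _ _ => hz
  have hglobal := ((isCompact_sphere (0 : E) 1).prod
    (isCompact_sphere (0 : E) 1)).eventually_forall_of_forall_eventually
      (P := fun ε p => 0 < ε → ‖p.1‖ = ‖p.2‖ →
        (1 + (ε * f p.1 - ε ^ 2 * Q p.1)) * ⟪gradient H p.1, p.2⟫ ≤ H p.2 * (1 + ε * f p.2)) hlocal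
  filter_upwards [hglobal.filter_mono nhdsWithin_le_nhds, self_mem_nhdsWithin]
    with ε hε hpos x hx ξ hξ
  exact hε (x, ξ) ⟨hx, hξ⟩ hpos
    ((mem_sphere_zero_iff_norm.1 hx).trans (mem_sphere_zero_iff_norm.1 hξ).symm)

end IsC2PlusSupportFunction

end LocalBrunnMinkowski

section SecondVariation

open scoped Topology

theorem exists_one_add_pow_eq_second_order (N : ℕ) :
    ∃ R : ℝ × ℝ × ℝ → ℝ, Continuous R ∧ ∀ ε u q : ℝ, (1 + (ε * u - ε ^ 2 * q)) ^ N =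
      1 + N * u * ε + (N * (N - 1) / 2 * u ^ 2 - N * q) * ε ^ 2 + R (ε, u, q) * ε ^ 3 := by
  induction N with
  | zero => exact ⟨0, continuous_zero, by simp⟩
  | succ N ih =>
    obtain ⟨R, hR, hpow⟩ := ih
    refine ⟨fun z => R z * (1 + (z.1 * z.2.1 - z.1 ^ 2 * z.2.2)) +
      (N * (N - 1) / 2 * z.2.1 ^ 2 - N * z.2.2) * (z.2.1 - z.1 * z.2.2) - N * z.2.1 * z.2.2,
      by fun_prop, fun ε u q => ?_⟩
    rw [pow_succ, hpow]
    push_cast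
    ring

variable {X : Type*} [TopologicalSpace X] [CompactSpace X] {D f Q : X → ℝ}

theorem eventually_forall_one_add_pos (hf : Continuous f) (hQ : Continuous Q) :
    ∀ᶠ ε in 𝓝[>] (0 : ℝ), ∀ x, 0 < 1 + (ε * f x - ε ^ 2 * Q x) := by
  have hlocal (x : X) : ∀ᶠ z : ℝ × X in 𝓝 (0, x), 0 < 1 + (z.1 * f z.2 - z.1 ^ 2 * Q z.2) :=
    continuousAt_const.eventually_lt (by fun_prop) (by simp)
  have hglobal := isCompact_univ.eventually_forall_of_forall_eventually
    (P := fun ε x => 0 < 1 + (ε * f x - ε ^ 2 * Q x)) fun x _ => hlocal x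
  exact (hglobal.filter_mono nhdsWithin_le_nhds).mono fun ε h x => h x (Set.mem_univ x)

variable [MeasurableSpace X] [OpensMeasurableSpace X] {μ : Measure X} [IsFiniteMeasure μ]

theorem eventually_integral_lt_integral_mul_pow (hD : Continuous D) (hf : Continuous f)
    (hQ : Continuous Q) (N : ℕ) (hf₀ : ∫ x, D x * f x ∂μ = 0)
    (hpos : 0 < ∫ x, D x * (N * (N - 1) / 2 * f x ^ 2 - N * Q x) ∂μ) :
    ∀ᶠ ε in 𝓝[>] 0, ∫ x, D x ∂μ < ∫ x, D x * (1 + (ε * f x - ε ^ 2 * Q x)) ^ N ∂μ := by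
  obtain ⟨R, hR, hpow⟩ := exists_one_add_pow_eq_second_order N
  have hint {g : X → ℝ} (hg : Continuous g) : Integrable g μ :=
    hg.integrable_of_hasCompactSupport (.of_compactSpace _)
  set c := ∫ x, D x * (N * (N - 1) / 2 * f x ^ 2 - N * Q x) ∂μ
  have hexpand (ε : ℝ) : ∫ x, D x * (1 + (ε * f x - ε ^ 2 * Q x)) ^ N ∂μ =
      ∫ x, D x ∂μ + ε ^ 2 * (c + ε * ∫ x, D x * R (ε, f x, Q x) ∂μ) := by
    calc ∫ x, D x * (1 + (ε * f x - ε ^ 2 * Q x)) ^ N ∂μ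
        = ∫ x, (D x + N * ε * (D x * f x) +
            ε ^ 2 * (D x * (N * (N - 1) / 2 * f x ^ 2 - N * Q x)) +
            ε ^ 3 * (D x * R (ε, f x, Q x))) ∂μ := by
          congr 1 with x
          rw [hpow]
          ring
      _ = _ := by
          rw [integral_add (hint (by fun_prop)) (hint (by fun_prop)),
            integral_add (hint (by fun_prop)) (hint (by fun_prop)),
            integral_add (hint (by fun_prop)) (hint (by fun_prop)),
            integral_const_mul, integral_const_mul, integral_const_mul, hf₀]
          ring
  have hcont : Continuous fun ε : ℝ => c + ε * ∫ x, D x * R (ε, f x, Q x) ∂μ := by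
    have := continuous_parametric_integral_of_continuous (μ := μ)
      (f := fun (ε : ℝ) x => D x * R (ε, f x, Q x)) (by fun_prop) isCompact_univ
    simp only [Measure.restrict_univ] at this
    fun_prop
  have hlead : ∀ᶠ ε in 𝓝[>] (0 : ℝ), 0 < c + ε * ∫ x, D x * R (ε, f x, Q x) ∂μ :=
    (hcont.tendsto' 0 c (by simp)).eventually_const_lt hpos |>.filter_mono nhdsWithin_le_nhds
  filter_upwards [hlead, self_mem_nhdsWithin] with ε hε hε₀
  rw [hexpand, lt_add_iff_pos_right]
  exact mul_pos (pow_pos hε₀ 2) hε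

namespace IsC2PlusSupportFunction

variable {E : Type*} [NormedAddCommGroup E] [InnerProductSpace ℝ E] [FiniteDimensional ℝ E]
  {H f Q : E → ℝ} {w : E → E} (hH : IsC2PlusSupportFunction H)
include hH

theorem continuousAt_mul_inner_hessian {x : E} (hx : x ≠ 0) (hw : ContinuousAt w x) :
    ContinuousAt (fun x => H x * ⟪hessian H x (w x), w x⟫) x := by
  have hHc := (hH.differentiableAt hx).continuousAt
  have hhess := continuousAt_hessian (hH.contDiffAt hx)
  fun_prop

variable [MeasurableSpace E] [BorelSpace E] [Nontrivial E]

theorem integral_second_variation_nonpos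
    (hf : ∀ x ∈ sphere (0 : E) 1, HasStrictFDerivAt f ((innerSL ℝ (w x)).comp (hessian H x)) x)
    (hQ : ∀ x ∈ sphere (0 : E) 1, ContinuousAt Q x)
    (hlt : ∀ x ∈ sphere (0 : E) 1, H x * ⟪hessian H x (w x), w x⟫ / 2 < Q x)
    (hf₀ : ∫ x : sphere (0 : E) 1, coneDensity H x * f x ∂volume.toSphere = 0) :
    ∫ x : sphere (0 : E) 1, coneDensity H x *
      (Module.finrank ℝ E * (Module.finrank ℝ E - 1) / 2 * f x ^ 2 - Module.finrank ℝ E * Q x)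
      ∂volume.toSphere ≤ 0 := by
  by_contra! hpos
  have hfc : ContinuousOn f (sphere 0 1) :=
    fun x hx => (hf x hx).continuousAt.continuousWithinAt
  have hQc : ContinuousOn Q (sphere 0 1) := fun x hx => (hQ x hx).continuousWithinAt
  have hf_neg (x : E) (hx : x ∈ sphere (0 : E) 1) :
      HasStrictFDerivAt (-f) ((innerSL ℝ (-w x)).comp (hessian H x)) x := by
    rw [map_neg, ContinuousLinearMap.neg_comp]
    exact (hf x hx).neg
  have hD : Continuous fun x : sphere (0 : E) 1 => coneDensity H x :=
    hH.continuousOn_coneDensity.domRestrict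
  have hfs : Continuous fun x : sphere (0 : E) 1 => f x := hfc.domRestrict
  have hQs : Continuous fun x : sphere (0 : E) 1 => Q x := hQc.domRestrict
  obtain ⟨ε, hs, ht, hs₀, ht₀, ha, hb, hgrow, hgrow_neg⟩ := (
    (hH.eventually_forall_perturbed_inner_gradient_le hf hQ hlt).and <|
    (hH.eventually_forall_perturbed_inner_gradient_le hf_neg hQ (by simpa using hlt)).and <|
    (eventually_forall_one_add_pos hfs hQs).and <|
    (eventually_forall_one_add_pos hfs.neg hQs).and <|
    (eventually_forall_one_add_pos hfs continuous_zero).and <|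
    (eventually_forall_one_add_pos hfs.neg continuous_zero).and <|
    (eventually_integral_lt_integral_mul_pow hD hfs hQs _ hf₀ hpos).and <|
    (eventually_integral_lt_integral_mul_pow hD hfs.neg hQs _
      (by simpa [integral_neg] using hf₀) (by simpa using hpos))).exists
  have hV : 0 ≤ ∫ x : sphere (0 : E) 1, coneDensity H x ∂volume.toSphere :=
    integral_nonneg fun x => abs_nonneg _
  refine (mul_lt_mul'' hgrow hgrow_neg hV hV).not_ge ?_
  rw [← sq]
  refine hH.integral_mul_integral_le_sq (s := fun x => 1 + (ε * f x - ε ^ 2 * Q x))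
    (t := fun x => 1 + (ε * -f x - ε ^ 2 * Q x))
    (by fun_prop) (by fun_prop) (fun x hx => hs₀ ⟨x, hx⟩) (fun x hx => ht₀ ⟨x, hx⟩)
    (a := fun ξ => H ξ * (1 + ε * f ξ)) (b := fun ξ => H ξ * (1 + ε * -f ξ))
    (fun ξ hξ => ?_) (fun ξ hξ => ?_) (fun ξ _ => ?_) hs ht
  · exact mul_pos (hH.pos ξ (ne_of_mem_sphere hξ one_ne_zero)) (by simpa using ha ⟨ξ, hξ⟩)
  · exact mul_pos (hH.pos ξ (ne_of_mem_sphere hξ one_ne_zero)) (by simpa using hb ⟨ξ, hξ⟩)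
  · linarith

theorem mul_integral_sq_le_two_mul_integral
    (hf : ∀ x ∈ sphere (0 : E) 1, HasStrictFDerivAt f ((innerSL ℝ (w x)).comp (hessian H x)) x)
    (hQ : ∀ x ∈ sphere (0 : E) 1, ContinuousAt Q x)
    (hlt : ∀ x ∈ sphere (0 : E) 1, H x * ⟪hessian H x (w x), w x⟫ / 2 < Q x)
    (hf₀ : ∫ x : sphere (0 : E) 1, coneDensity H x * f x ∂volume.toSphere = 0) :
    (Module.finrank ℝ E - 1) *
        ∫ x : sphere (0 : E) 1, coneDensity H x * f x ^ 2 ∂volume.toSphere ≤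
      2 * ∫ x : sphere (0 : E) 1, coneDensity H x * Q x ∂volume.toSphere := by
  have hfi : Integrable (fun x : sphere (0 : E) 1 => coneDensity H x * f x ^ 2) volume.toSphere :=
    integrable_toSphere_of_continuousOn volume (hH.continuousOn_coneDensity.mul
      (.pow (fun x hx => (hf x hx).continuousAt.continuousWithinAt) 2))
  have hQi : Integrable (fun x : sphere (0 : E) 1 => coneDensity H x * Q x) volume.toSphere :=
    integrable_toSphere_of_continuousOn volume (hH.continuousOn_coneDensity.mul
      fun x hx => (hQ x hx).continuousWithinAt)
  have hvar := hH.integral_second_variation_nonpos hf hQ hlt hf₀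
  have hexpand (x : sphere (0 : E) 1) : coneDensity H x *
      (Module.finrank ℝ E * (Module.finrank ℝ E - 1) / 2 * f x ^ 2 - Module.finrank ℝ E * Q x) =
      Module.finrank ℝ E / 2 * ((Module.finrank ℝ E - 1) * (coneDensity H x * f x ^ 2) -
        2 * (coneDensity H x * Q x)) := by
    ring
  simp_rw [hexpand] at hvar
  rw [integral_const_mul, integral_sub (hfi.const_mul _) (hQi.const_mul _), integral_const_mul,
    integral_const_mul] at hvar
  have hdim : (0 : ℝ) < Module.finrank ℝ E / 2 := half_pos (Nat.cast_pos.2 Module.finrank_pos)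
  exact sub_nonpos.1 (nonpos_of_mul_nonpos_right hvar hdim)

theorem local_brunn_minkowski
    (hf : ∀ x ∈ sphere (0 : E) 1, HasStrictFDerivAt f ((innerSL ℝ (w x)).comp (hessian H x)) x)
    (hw : ∀ x ∈ sphere (0 : E) 1, ContinuousAt w x)
    (hf₀ : ∫ x : sphere (0 : E) 1, coneDensity H x * f x ∂volume.toSphere = 0) :
    (Module.finrank ℝ E - 1) *
        ∫ x : sphere (0 : E) 1, coneDensity H x * f x ^ 2 ∂volume.toSphere ≤
      ∫ x : sphere (0 : E) 1, coneDensity H x * (H x * ⟪hessian H x (w x), w x⟫)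
        ∂volume.toSphere := by
  have hq (x : E) (hx : x ∈ sphere (0 : E) 1) :=
    hH.continuousAt_mul_inner_hessian (ne_of_mem_sphere hx one_ne_zero) (hw x hx)
  have hDi : Integrable (fun x : sphere (0 : E) 1 => coneDensity H x) volume.toSphere :=
    integrable_toSphere_of_continuousOn volume hH.continuousOn_coneDensity
  have hqi : Integrable (fun x : sphere (0 : E) 1 =>
      coneDensity H x * (H x * ⟪hessian H x (w x), w x⟫)) volume.toSphere :=
    integrable_toSphere_of_continuousOn volume (hH.continuousOn_coneDensity.mul
      fun x hx => (hq x hx).continuousWithinAt)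
  set V := ∫ x : sphere (0 : E) 1, coneDensity H x ∂volume.toSphere
  set J := ∫ x : sphere (0 : E) 1, coneDensity H x * (H x * ⟪hessian H x (w x), w x⟫)
    ∂volume.toSphere
  have hlim : Filter.Tendsto (fun δ : ℝ => 2 * (J / 2 + V * δ)) (𝓝[>] 0) (𝓝 J) :=
    (Continuous.tendsto' (by fun_prop) _ _ (by ring)).mono_left nhdsWithin_le_nhds
  refine ge_of_tendsto hlim (eventually_mem_nhdsWithin.mono fun δ (hδ : 0 < δ) => ?_)
  refine (hH.mul_integral_sq_le_two_mul_integral hf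
    (Q := fun x => H x * ⟪hessian H x (w x), w x⟫ / 2 + δ)
    (fun x hx => ((hq x hx).div_const 2).add_const δ) (fun x _ => lt_add_of_pos_right _ hδ)
    hf₀).trans_eq ?_
  simp_rw [mul_add, ← mul_div_assoc (coneDensity H _)]
  rw [integral_add (hqi.div_const 2) (hDi.mul_const δ), integral_div, integral_mul_const, mul_add]

end IsC2PlusSupportFunction

end SecondVariation

section Divergence

variable {E : Type*} [NormedAddCommGroup E] [InnerProductSpace ℝ E] {W : E → E} {y : E}

/-- The divergence of a vector field on `E`, as the trace of its derivative. -/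
def divergence (W : E → E) (y : E) : ℝ := LinearMap.trace ℝ E (fderiv ℝ W y)

theorem divergence_smul [FiniteDimensional ℝ E] {c : E → ℝ} (hc : DifferentiableAt ℝ c y)
    (hW : DifferentiableAt ℝ W y) :
    divergence (fun z => c z • W z) y = c y * divergence W y + fderiv ℝ c y (W y) := by
  have htrace : LinearMap.trace ℝ E ((fderiv ℝ c y).smulRight (W y)) = fderiv ℝ c y (W y) :=
    LinearMap.trace_smulRight _ _
  rw [divergence, fderiv_fun_smul hc hW, ContinuousLinearMap.toLinearMap_add,
    ContinuousLinearMap.toLinearMap_smul, map_add, map_smul, htrace, smul_eq_mul, divergence]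

theorem divergence_smul_arg {c m : ℝ} (hc : 0 < c)
    (hhom : ∀ z, z ≠ 0 → W (c • z) = c ^ m • W z) (hy : y ≠ 0) :
    divergence W (c • y) = c ^ (m - 1) * divergence W y := by
  have heq : (fun z => W (c • z)) =ᶠ[nhds y] c ^ m • W := by
    filter_upwards [isOpen_ne.mem_nhds hy] with z hz using hhom z hz
  have hfderiv : c • fderiv ℝ W (c • y) = c ^ m • fderiv ℝ W y := by
    rw [← fderiv_comp_smul, heq.fderiv_eq, fderiv_const_smul_field, Pi.smul_apply]
  have htrace : c * divergence W (c • y) = c ^ m * divergence W y := by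
    simpa [divergence] using congr(LinearMap.trace ℝ E $hfderiv)
  rw [Real.rpow_sub_one hc.ne', div_mul_eq_mul_div, eq_div_iff hc.ne', mul_comm, htrace]

variable [FiniteDimensional ℝ E]

theorem continuous_trace : Continuous fun A : E →L[ℝ] E => LinearMap.trace ℝ E A :=
  ((LinearMap.trace ℝ E).comp (ContinuousLinearMap.coeLM ℝ)).continuous_of_finiteDimensional

theorem continuousAt_divergence (hW : ContDiffAt ℝ 1 W y) : ContinuousAt (divergence W) y :=
  continuous_trace.continuousAt.comp (hW.fderiv_right (m := 0) le_rfl).continuousAt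

variable [MeasurableSpace E] [BorelSpace E]

theorem integral_fderiv_apply_eq_zero {μ : Measure E} [μ.IsAddHaarMeasure] {f : E → ℝ}
    (hf : ContDiff ℝ 1 f) (hsupp : HasCompactSupport f) (v : E) : ∫ y, fderiv ℝ f y v ∂μ = 0 := by
  have hint : Integrable (fun y => fderiv ℝ f y v) μ :=
    ((hf.continuous_fderiv one_ne_zero).clm_apply continuous_const).integrable_of_hasCompactSupport
      (hsupp.fderiv_apply ℝ v)
  simpa using integral_mul_fderiv_eq_neg_fderiv_mul_of_integrable (μ := μ) (f := fun _ => (1 : ℝ))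
    (g := f) (v := v) (by simp) (by simpa using hint)
    (by simpa using hf.continuous.integrable_of_hasCompactSupport hsupp)
    (fun _ _ => differentiableAt_const _) fun y _ => hf.differentiable one_ne_zero y

theorem integral_divergence_eq_zero {μ : Measure E} [μ.IsAddHaarMeasure] (hW : ContDiff ℝ 1 W)
    (hsupp : HasCompactSupport W) : ∫ y, divergence W y ∂μ = 0 := by
  let b := stdOrthonormalBasis ℝ E
  have hcomp (i) : ContDiff ℝ 1 fun y => ⟪b i, W y⟫ := contDiff_const.inner ℝ hW
  have hcomp_supp (i) : HasCompactSupport fun y => ⟪b i, W y⟫ :=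
    hsupp.comp_left (g := fun w => ⟪b i, w⟫) (inner_zero_right _)
  have hdiv (y : E) : divergence W y = ∑ i, fderiv ℝ (fun z => ⟪b i, W z⟫) y (b i) := by
    rw [divergence, LinearMap.trace_eq_sum_inner _ b]
    refine Finset.sum_congr rfl fun i _ => ?_
    rw [fderiv_inner_apply ℝ (differentiableAt_const _) (hW.differentiable one_ne_zero y)]
    simp
  have hint (i) : Integrable (fun y => fderiv ℝ (fun z => ⟪b i, W z⟫) y (b i)) μ :=
    (((hcomp i).continuous_fderiv one_ne_zero).clm_apply
      continuous_const).integrable_of_hasCompactSupport ((hcomp_supp i).fderiv_apply ℝ _)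
  simp_rw [hdiv]
  rw [integral_finsetSum _ fun i _ => hint i]
  exact Finset.sum_eq_zero fun i _ => integral_fderiv_apply_eq_zero (hcomp i) (hcomp_supp i) _

end Divergence

section RadialCutoff

variable {E : Type*} [NormedAddCommGroup E]

/-- A smooth bump around `1`; evaluated at `‖y‖ ^ 2` it is a radial cutoff supported in an annulus
around the unit sphere. -/
def annulusBump : ContDiffBump (1 : ℝ) := ⟨1 / 4, 1 / 2, by norm_num, by norm_num⟩

theorem annulusBump_eventually_eq_zero : ∀ᶠ y : E in nhds 0, annulusBump (‖y‖ ^ 2) = 0 := by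
  have hsmall : ∀ᶠ y : E in nhds 0, ‖y‖ ^ 2 < 1 / 2 :=
    (Continuous.continuousAt (by fun_prop)).eventually_lt continuousAt_const (by simp)
  filter_upwards [hsmall] with y hy
  refine annulusBump.zero_of_le_dist ?_
  rw [Real.dist_eq, abs_sub_comm, abs_of_nonneg (by linarith)]
  change 1 / 2 ≤ _
  linarith

variable [InnerProductSpace ℝ E]
  {F : Type*} [NormedAddCommGroup F] [NormedSpace ℝ F] {V : E → F}

theorem contDiff_annulusBump_smul {k : ℕ∞} (hV : ∀ y, y ≠ 0 → ContDiffAt ℝ k V y) :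
    ContDiff ℝ k fun y => annulusBump (‖y‖ ^ 2) • V y := by
  refine contDiff_iff_contDiffAt.2 fun y => ?_
  obtain rfl | hy := eq_or_ne y 0
  · refine (contDiffAt_const (c := (0 : F))).congr_of_eventuallyEq ?_
    filter_upwards [annulusBump_eventually_eq_zero] with y hy
    rw [hy, zero_smul]
  · exact (annulusBump.contDiff.comp (contDiff_norm_sq ℝ)).contDiffAt.smul (hV y hy)

variable [FiniteDimensional ℝ E]

theorem hasCompactSupport_annulusBump_smul (V : E → F) :
    HasCompactSupport fun y => annulusBump (‖y‖ ^ 2) • V y := by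
  refine .intro (isCompact_closedBall 0 2) fun y hy => ?_
  rw [mem_closedBall, dist_zero_right, not_le] at hy
  rw [annulusBump.zero_of_le_dist, zero_smul]
  have hsq : 2 ^ 2 < ‖y‖ ^ 2 := by gcongr
  rw [Real.dist_eq, abs_of_nonneg (by linarith)]
  change 1 / 2 ≤ _
  linarith

variable [MeasurableSpace E] [BorelSpace E] [Nontrivial E]

variable (E) in
theorem integral_annulusBump_mul_rpow_ne_zero (m : ℝ) : ∫ r : Set.Ioi (0 : ℝ),
    annulusBump (r ^ 2) * (r : ℝ) ^ m ∂Measure.volumeIoiPow (Module.finrank ℝ E - 1) ≠ 0 := by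
  obtain ⟨e, he⟩ := exists_norm_eq E zero_le_one
  have hcont : Continuous fun y : E => annulusBump (‖y‖ ^ 2) • ‖y‖ ^ m :=
    (contDiff_annulusBump_smul (k := 0) fun y hy =>
      (contDiffAt_norm ℝ hy).rpow_const_of_ne (norm_ne_zero_iff.2 hy)).continuous
  have hpos := hcont.integral_pos_of_hasCompactSupport_nonneg_nonzero (μ := volume) (x := e)
    (hasCompactSupport_annulusBump_smul _)
    (fun y => smul_nonneg annulusBump.nonneg (Real.rpow_nonneg (norm_nonneg y) m))
    (by simp [he, annulusBump.one_of_mem_closedBall (mem_closedBall_self annulusBump.rIn_pos.le)])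
  have hpolar := integral_comp_normalize_mul_comp_norm (volume : Measure E) (fun _ => 1)
    (fun r => annulusBump (r ^ 2) * r ^ m)
  simp only [one_mul] at hpolar
  simp only [smul_eq_mul] at hpos
  exact right_ne_zero_of_mul (hpolar ▸ hpos.ne')

/-- Cutting off radially and integrating by parts in `E` avoids any calculus on the sphere. -/
theorem integral_sphere_divergence_eq_zero {W : E → E} {m : ℝ}
    (hW : ∀ y, y ≠ 0 → ContDiffAt ℝ 1 W y) (htangent : ∀ y, y ≠ 0 → ⟪y, W y⟫ = 0)
    (hhom : ∀ c : ℝ, 0 < c → ∀ y, y ≠ 0 → W (c • y) = c ^ m • W y) :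
    ∫ x : sphere (0 : E) 1, divergence W x ∂volume.toSphere = 0 := by
  have hcutoff (y : E) (hy : y ≠ 0) : divergence (fun z => annulusBump (‖z‖ ^ 2) • W z) y =
      divergence W (‖y‖⁻¹ • y) * (annulusBump (‖y‖ ^ 2) * ‖y‖ ^ (m - 1)) := by
    have hbump : HasFDerivAt (fun z : E => annulusBump (‖z‖ ^ 2))
        (deriv annulusBump (‖y‖ ^ 2) • (2 • innerSL ℝ y)) y :=
      ((annulusBump.contDiff (n := 1)).differentiable one_ne_zero _).hasDerivAt.comp_hasFDerivAt y
        (hasStrictFDerivAt_norm_sq y).hasFDerivAt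
    have hy' : ‖y‖⁻¹ • y ≠ 0 := smul_ne_zero (inv_ne_zero (norm_ne_zero_iff.2 hy)) hy
    have hscale := divergence_smul_arg (norm_pos_iff.2 hy) (hhom _ (norm_pos_iff.2 hy)) hy'
    rw [smul_inv_smul₀ (norm_ne_zero_iff.2 hy)] at hscale
    rw [divergence_smul hbump.differentiableAt ((hW y hy).differentiableAt one_ne_zero),
      hbump.fderiv, hscale]
    simp only [_root_.smul_apply, innerSL_apply_apply, htangent y hy, smul_zero]
    ring
  have hzero := integral_divergence_eq_zero (μ := volume) (contDiff_annulusBump_smul hW)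
    (hasCompactSupport_annulusBump_smul W)
  rw [integral_congr_ae ((Measure.ae_ne volume 0).mono hcutoff),
    integral_comp_normalize_mul_comp_norm volume (divergence W)
      (fun r => annulusBump (r ^ 2) * r ^ (m - 1))] at hzero
  exact (mul_eq_zero.1 hzero).resolve_right (integral_annulusBump_mul_rpow_ne_zero E _)

end RadialCutoff

section TangentialGradient

variable {E : Type*} [NormedAddCommGroup E] [InnerProductSpace ℝ E]

theorem hasStrictFDerivAt_norm_rpow_of_ne_zero (a : ℝ) {v : E} (hv : v ≠ 0) :
    HasStrictFDerivAt (fun z : E => ‖z‖ ^ a) ((a * ‖v‖ ^ (a - 2)) • innerSL ℝ v) v := by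
  have hpow (z : E) (b : ℝ) : (‖z‖ ^ 2) ^ b = ‖z‖ ^ (2 * b) := by
    rw [← Real.rpow_natCast, ← Real.rpow_mul (norm_nonneg z), Nat.cast_ofNat]
  have hderiv := (hasStrictFDerivAt_norm_sq v).rpow_const (p := a / 2)
    (Or.inl (pow_ne_zero 2 (norm_ne_zero_iff.2 hv)))
  simp only [hpow, mul_div_cancel₀ a two_ne_zero] at hderiv
  refine hderiv.congr_fderiv ?_
  rw [show 2 * (a / 2 - 1) = a - 2 by ring]
  module

theorem rpow_sub_two_mul_sq (a : ℝ) {r : ℝ} (hr : 0 < r) : r ^ (a - 2) * r ^ 2 = r ^ a := by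
  rw [← Real.rpow_natCast, ← Real.rpow_add hr, Nat.cast_ofNat, sub_add_cancel]

/-- The vector field `‖y‖² ∇H(y) - H(y) y`. It is tangent to the spheres around the origin, and on
the unit sphere it is the spherical gradient of a 1-homogeneous `H`. -/
def tangentGradient [CompleteSpace E] (H : E → ℝ) (y : E) : E := ‖y‖ ^ 2 • gradient H y - H y • y

namespace IsC2PlusSupportFunction

variable [FiniteDimensional ℝ E] {H : E → ℝ} (hH : IsC2PlusSupportFunction H) {x y : E}
include hH

theorem inner_tangentGradient_self (hy : y ≠ 0) : ⟪y, tangentGradient H y⟫ = 0 := by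
  rw [tangentGradient, inner_sub_right, real_inner_smul_right, real_inner_smul_right,
    real_inner_self_eq_norm_sq, real_inner_comm, hH.inner_gradient_self hy]
  ring

theorem contDiffAt_tangentGradient (hy : y ≠ 0) : ContDiffAt ℝ 1 (tangentGradient H) y :=
  ((contDiff_norm_sq ℝ).contDiffAt.smul (contDiffAt_gradient (hH.contDiffAt hy))).sub
    (((hH.contDiffAt hy).of_le one_le_two).smul contDiffAt_id)

theorem tangentGradient_smul {c : ℝ} (hc : 0 < c) (y : E) :
    tangentGradient H (c • y) = c ^ 2 • tangentGradient H y := by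
  rw [tangentGradient, tangentGradient, hH.isPosHomogeneous.gradient_smul hc,
    hH.isPosHomogeneous c hc, norm_smul, Real.norm_of_nonneg hc.le]
  module

theorem divergence_tangentGradient (hy : y ≠ 0) : divergence (tangentGradient H) y =
    ‖y‖ ^ 2 * divergence (gradient H) y - (Module.finrank ℝ E - 1) * H y := by
  have hnorm : DifferentiableAt ℝ (fun z : E => ‖z‖ ^ 2) y :=
    (hasStrictFDerivAt_norm_sq y).hasFDerivAt.differentiableAt
  have hgrad := (hH.hasStrictFDerivAt_gradient hy).hasFDerivAt.differentiableAt
  have hHd := hH.differentiableAt hy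
  have hsub : divergence (tangentGradient H) y =
      divergence (fun z => ‖z‖ ^ 2 • gradient H z) y - divergence (fun z => H z • z) y := by
    rw [divergence, divergence, divergence, ← map_sub, ← ContinuousLinearMap.toLinearMap_sub,
      ← fderiv_fun_sub (hnorm.fun_smul hgrad) (hHd.fun_smul differentiableAt_fun_id)]
    rfl
  have hid : divergence (fun z : E => z) y = Module.finrank ℝ E := by
    rw [divergence, fderiv_fun_id]
    exact LinearMap.trace_id ℝ E
  rw [hsub, divergence_smul hnorm hgrad, divergence_smul hHd differentiableAt_fun_id, hid,
    (hasStrictFDerivAt_norm_sq y).hasFDerivAt.fderiv, (hH.hasFDerivAt hy).fderiv]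
  simp only [_root_.smul_apply, innerSL_apply_apply, nsmul_eq_mul, Nat.cast_ofNat]
  rw [real_inner_comm, hH.inner_gradient_self hy]
  ring

theorem hasFDerivAt_rpow_mul_norm_gradient_rpow (a b : ℝ) (hy : y ≠ 0) :
    HasFDerivAt (fun z => H z ^ a * ‖gradient H z‖ ^ b)
      (innerSL ℝ ((a * H y ^ (a - 1) * ‖gradient H y‖ ^ b) • gradient H y +
        (b * H y ^ a * ‖gradient H y‖ ^ (b - 2)) • hessian H y (gradient H y))) y := by
  have hpow := (hH.hasFDerivAt hy).rpow_const (p := a) (Or.inl (hH.pos y hy).ne')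
  have hnorm := (hasStrictFDerivAt_norm_rpow_of_ne_zero b
    (hH.gradient_ne_zero hy)).hasFDerivAt.comp y (hH.hasStrictFDerivAt_gradient hy).hasFDerivAt
  refine (hpow.mul hnorm).congr_fderiv (ContinuousLinearMap.ext fun v => ?_)
  simp only [_root_.add_apply, _root_.smul_apply, ContinuousLinearMap.comp_apply,
    innerSL_apply_apply, inner_add_left, real_inner_smul_left, smul_eq_mul, Function.comp_apply,
    hH.inner_hessian_comm hy]
  ring

theorem divergence_smul_tangentGradient (p α : ℝ) (hx : x ∈ sphere (0 : E) 1) :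
    divergence (fun y => (H y ^ (p + 1) * ‖gradient H y‖ ^ α) • tangentGradient H y) x =
      H x ^ (p + 1) * ‖gradient H x‖ ^ α *
        (divergence (gradient H) x - (Module.finrank ℝ E - 1) * H x) +
      (p + 1) * (H x ^ p * ‖gradient H x‖ ^ α) * (‖gradient H x‖ ^ 2 - H x ^ 2) +
      α * (H x ^ (p + 1) * ‖gradient H x‖ ^ (α - 2)) *
        ⟪hessian H x (gradient H x), gradient H x⟫ := by
  have hx₀ : x ≠ 0 := ne_of_mem_sphere hx one_ne_zero
  have hnorm : ‖x‖ = 1 := mem_sphere_zero_iff_norm.1 hx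
  have hweight := hH.hasFDerivAt_rpow_mul_norm_gradient_rpow (p + 1) α hx₀
  rw [divergence_smul hweight.differentiableAt
      ((hH.contDiffAt_tangentGradient hx₀).differentiableAt one_ne_zero),
    hH.divergence_tangentGradient hx₀, hweight.fderiv, add_sub_cancel_right]
  simp only [tangentGradient, hnorm, one_pow, one_smul, one_mul, innerSL_apply_apply,
    inner_add_left, inner_sub_right, real_inner_smul_left, real_inner_smul_right]
  rw [hH.inner_hessian_comm hx₀ _ x, hH.hessian_self hx₀, inner_zero_right,
    hH.inner_gradient_self hx₀, real_inner_self_eq_norm_sq]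
  ring

theorem contDiffAt_rpow_smul_tangentGradient (p α : ℝ) (hy : y ≠ 0) : ContDiffAt ℝ 1
    (fun y => (H y ^ (p + 1) * ‖gradient H y‖ ^ α) • tangentGradient H y) y := by
  have hpow := ((hH.contDiffAt hy).of_le one_le_two).rpow_const_of_ne (p := p + 1)
    (hH.pos y hy).ne'
  have hgrad := ((contDiffAt_gradient (m := 1) (hH.contDiffAt hy)).norm ℝ
    (hH.gradient_ne_zero hy)).rpow_const_of_ne (p := α)
    (norm_ne_zero_iff.2 (hH.gradient_ne_zero hy))
  exact (hpow.mul hgrad).smul (hH.contDiffAt_tangentGradient hy)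

theorem integral_divergence_smul_tangentGradient [MeasurableSpace E] [BorelSpace E] [Nontrivial E]
    (p α : ℝ) : ∫ x : sphere (0 : E) 1, divergence
      (fun y => (H y ^ (p + 1) * ‖gradient H y‖ ^ α) • tangentGradient H y) x
      ∂volume.toSphere = 0 := by
  refine integral_sphere_divergence_eq_zero (m := p + 3)
    (fun y hy => hH.contDiffAt_rpow_smul_tangentGradient p α hy) (fun y hy => ?_)
    fun c hc y hy => ?_
  · rw [real_inner_smul_right, hH.inner_tangentGradient_self hy, mul_zero]
  · have hexp : c ^ (p + 3) = c ^ (p + 1) * c ^ 2 := by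
      rw [← Real.rpow_natCast, ← Real.rpow_add hc, Nat.cast_ofNat]
      congr 1
      ring
    rw [hH.isPosHomogeneous c hc, hH.isPosHomogeneous.gradient_smul hc, hH.tangentGradient_smul hc,
      Real.mul_rpow hc.le (hH.pos y hy).le, hexp]
    module

end IsC2PlusSupportFunction

end TangentialGradient

section VectorLocalBrunnMinkowski

theorem integral_mul_sub_mean_sq {X : Type*} [MeasurableSpace X] {μ : Measure X} {D f : X → ℝ}
    (hD : Integrable D μ) (hf : Integrable (fun x => D x * f x) μ)
    (hf₂ : Integrable (fun x => D x * f x ^ 2) μ) (hV : ∫ x, D x ∂μ ≠ 0) :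
    ∫ x, D x * (f x - (∫ x, D x * f x ∂μ) / ∫ x, D x ∂μ) ^ 2 ∂μ =
      (∫ x, D x * f x ^ 2 ∂μ) - (∫ x, D x * f x ∂μ) ^ 2 / ∫ x, D x ∂μ := by
  set m := (∫ x, D x * f x ∂μ) / ∫ x, D x ∂μ with hm
  have hlin : Integrable (fun x => 2 * m * (D x * f x) - m ^ 2 * D x) μ :=
    (hf.const_mul _).sub (hD.const_mul _)
  have hexpand (x : X) : D x * (f x - m) ^ 2 =
      D x * f x ^ 2 - (2 * m * (D x * f x) - m ^ 2 * D x) := by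
    ring
  simp_rw [hexpand]
  rw [integral_sub hf₂ hlin, integral_sub (hf.const_mul _) (hD.const_mul _), integral_const_mul,
    integral_const_mul, hm]
  field_simp
  ring

theorem sum_integral_mul_inner_sq {X E ι : Type*} [MeasurableSpace X] {μ : Measure X}
    [NormedAddCommGroup E] [InnerProductSpace ℝ E] [CompleteSpace E] [Fintype ι]
    (b : OrthonormalBasis ι ℝ E) {D : X → ℝ} {F : X → E}
    (hF : Integrable (fun x => D x • F x) μ) :
    ∑ i, (∫ x, D x * ⟪b i, F x⟫ ∂μ) ^ 2 = ‖∫ x, D x • F x ∂μ‖ ^ 2 := by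
  simp_rw [← b.sum_sq_inner_right (∫ x, D x • F x ∂μ), ← integral_inner hF, real_inner_smul_right]

variable {E : Type*} [NormedAddCommGroup E] [InnerProductSpace ℝ E] [FiniteDimensional ℝ E]

namespace IsC2PlusSupportFunction

variable {H : E → ℝ} (hH : IsC2PlusSupportFunction H) {x : E}
include hH

theorem coneDensity_pos (hx : x ∈ sphere (0 : E) 1) : 0 < coneDensity H x := by
  have hx₀ : x ≠ 0 := ne_of_mem_sphere hx one_ne_zero
  have hnorm : ‖x‖ = 1 := mem_sphere_zero_iff_norm.1 hx
  rw [coneDensity, hH.det_coneMapDeriv hx, abs_pos]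
  refine ((LinearMap.isUnit_iff_isUnit_det _).1 <| (LinearMap.isUnit_iff_ker_eq_bot _).2 <|
    LinearMap.ker_eq_bot'.2 fun v (hv : hessian H x v + (H x • ⟪x, v⟫) • x = 0) => ?_).ne_zero
  have hinner : ⟪x, v⟫ = 0 := by
    have := congr(⟪$hv, x⟫)
    simpa [inner_add_left, real_inner_smul_left, hH.inner_hessian_comm hx₀ v x,
      hH.hessian_self hx₀, hnorm, (hH.pos x hx₀).ne'] using this
  rw [hinner, smul_zero, zero_smul, add_zero] at hv
  by_contra hv₀
  have hspan : v ∉ Submodule.span ℝ {x} := fun hmem => by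
    obtain ⟨k, rfl⟩ := Submodule.mem_span_singleton.1 hmem
    rw [real_inner_smul_right, real_inner_self_eq_norm_sq, hnorm, one_pow, mul_one] at hinner
    exact hv₀ (by rw [hinner, zero_smul])
  exact (hH.inner_hessian_pos x hx₀ v hspan).ne' (by rw [hv, inner_zero_left])

variable [MeasurableSpace E] [BorelSpace E] [Nontrivial E]

theorem integral_coneDensity_pos :
    0 < ∫ x : sphere (0 : E) 1, coneDensity H x ∂volume.toSphere := by
  obtain ⟨e, he⟩ := exists_norm_eq E zero_le_one
  have hcont : Continuous fun x : sphere (0 : E) 1 => coneDensity H x :=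
    hH.continuousOn_coneDensity.domRestrict
  exact hcont.integral_pos_of_hasCompactSupport_nonneg_nonzero (.of_compactSpace _)
    (fun x => (hH.coneDensity_pos x.2).le)
    (hH.coneDensity_pos (mem_sphere_zero_iff_norm.2 he)).ne' (x := ⟨e, by simpa using he⟩)

theorem local_brunn_minkowski_variance {f : E → ℝ} {w : E → E}
    (hf : ∀ x ∈ sphere (0 : E) 1, HasStrictFDerivAt f ((innerSL ℝ (w x)).comp (hessian H x)) x)
    (hw : ∀ x ∈ sphere (0 : E) 1, ContinuousAt w x) :
    (Module.finrank ℝ E - 1) *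
        ((∫ x : sphere (0 : E) 1, coneDensity H x * f x ^ 2 ∂volume.toSphere) -
          (∫ x : sphere (0 : E) 1, coneDensity H x * f x ∂volume.toSphere) ^ 2 /
            ∫ x : sphere (0 : E) 1, coneDensity H x ∂volume.toSphere) ≤
      ∫ x : sphere (0 : E) 1, coneDensity H x * (H x * ⟪hessian H x (w x), w x⟫)
        ∂volume.toSphere := by
  have hfc : ContinuousOn f (sphere 0 1) := fun x hx => (hf x hx).continuousAt.continuousWithinAt
  have hDi : Integrable (fun x : sphere (0 : E) 1 => coneDensity H x) volume.toSphere :=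
    integrable_toSphere_of_continuousOn volume hH.continuousOn_coneDensity
  have hfi : Integrable (fun x : sphere (0 : E) 1 => coneDensity H x * f x) volume.toSphere :=
    integrable_toSphere_of_continuousOn volume (hH.continuousOn_coneDensity.mul hfc)
  have hfi₂ : Integrable (fun x : sphere (0 : E) 1 => coneDensity H x * f x ^ 2) volume.toSphere :=
    integrable_toSphere_of_continuousOn volume (hH.continuousOn_coneDensity.mul (hfc.pow 2))
  have hV := hH.integral_coneDensity_pos
  set V := ∫ x : sphere (0 : E) 1, coneDensity H x ∂volume.toSphere
  set I := ∫ x : sphere (0 : E) 1, coneDensity H x * f x ∂volume.toSphere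
  have hmean : ∫ x : sphere (0 : E) 1, coneDensity H x * (f x - I / V) ∂volume.toSphere = 0 := by
    simp_rw [mul_sub]
    rw [integral_sub hfi (hDi.mul_const _), integral_mul_const, mul_div_cancel₀ _ hV.ne', sub_self]
  have hvariance : ∫ x : sphere (0 : E) 1, coneDensity H x * (f x - I / V) ^ 2 ∂volume.toSphere =
      (∫ x : sphere (0 : E) 1, coneDensity H x * f x ^ 2 ∂volume.toSphere) - I ^ 2 / V :=
    integral_mul_sub_mean_sq hDi hfi hfi₂ hV.ne'
  rw [← hvariance]
  exact hH.local_brunn_minkowski (fun x hx => (hf x hx).sub_const _) hw hmean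

theorem local_brunn_minkowski_vector {F : E → E} {L : E → E →L[ℝ] E}
    (hF : ∀ x ∈ sphere (0 : E) 1, HasStrictFDerivAt F ((L x).comp (hessian H x)) x)
    (hL : ∀ x ∈ sphere (0 : E) 1, ContinuousAt L x) :
    (Module.finrank ℝ E - 1) *
        ((∫ x : sphere (0 : E) 1, coneDensity H x * ‖F x‖ ^ 2 ∂volume.toSphere) -
          ‖∫ x : sphere (0 : E) 1, coneDensity H x • F x ∂volume.toSphere‖ ^ 2 /
            ∫ x : sphere (0 : E) 1, coneDensity H x ∂volume.toSphere) ≤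
      ∫ x : sphere (0 : E) 1, coneDensity H x * (H x * LinearMap.trace ℝ E
        (L x ∘L hessian H x ∘L ContinuousLinearMap.adjoint (L x))) ∂volume.toSphere := by
  let b := stdOrthonormalBasis ℝ E
  let w (i) (x : E) : E := ContinuousLinearMap.adjoint (L x) (b i)
  have hFc : ContinuousOn F (sphere 0 1) := fun x hx => (hF x hx).continuousAt.continuousWithinAt
  have hw (i) (x : E) (hx : x ∈ sphere (0 : E) 1) : ContinuousAt (w i) x := by
    have := hL x hx
    fun_prop
  have hcoord (i) := hH.local_brunn_minkowski_variance (f := fun x => ⟪b i, F x⟫) (w := w i)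
    (fun x hx => ((innerSL ℝ (b i)).hasStrictFDerivAt.comp x (hF x hx)).congr_fderiv <| by
      ext v
      exact (ContinuousLinearMap.adjoint_inner_left (L x) _ _).symm)
    (hw i)
  have hsum := Finset.sum_le_sum fun i (_ : i ∈ Finset.univ) => hcoord i
  have hmean := sum_integral_mul_inner_sq b (integrable_toSphere_of_continuousOn volume
    (g := fun x => coneDensity H x • F x) (hH.continuousOn_coneDensity.smul hFc))
  have hsq : ∑ i, ∫ x : sphere (0 : E) 1, coneDensity H x * ⟪b i, F x⟫ ^ 2 ∂volume.toSphere =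
      ∫ x : sphere (0 : E) 1, coneDensity H x * ‖F x‖ ^ 2 ∂volume.toSphere := by
    rw [← integral_finsetSum _ fun i _ => integrable_toSphere_of_continuousOn volume
      (g := fun x => coneDensity H x * ⟪b i, F x⟫ ^ 2)
      (hH.continuousOn_coneDensity.mul ((continuousOn_const.inner hFc).pow 2))]
    simp_rw [← Finset.mul_sum, b.sum_sq_inner_right]
  have htrace : ∑ i, ∫ x : sphere (0 : E) 1, coneDensity H x * (H x *
      ⟪hessian H x (w i x), w i x⟫) ∂volume.toSphere =
      ∫ x : sphere (0 : E) 1, coneDensity H x * (H x * LinearMap.trace ℝ E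
        (L x ∘L hessian H x ∘L ContinuousLinearMap.adjoint (L x))) ∂volume.toSphere := by
    rw [← integral_finsetSum _ fun i _ => integrable_toSphere_of_continuousOn volume
      (g := fun x => coneDensity H x * (H x * ⟪hessian H x (w i x), w i x⟫))
      (hH.continuousOn_coneDensity.mul fun x hx => (hH.continuousAt_mul_inner_hessian
        (ne_of_mem_sphere hx one_ne_zero) (hw i x hx)).continuousWithinAt)]
    simp_rw [← Finset.mul_sum, LinearMap.trace_eq_sum_inner _ b]
    congr! 5 with x i
    rw [real_inner_comm]
    exact ContinuousLinearMap.adjoint_inner_left (L x) _ _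
  rwa [← Finset.mul_sum, Finset.sum_sub_distrib, ← Finset.sum_div, hsq, hmean, htrace] at hsum

end IsC2PlusSupportFunction

end VectorLocalBrunnMinkowski

section NormRpowSmul

variable {E : Type*} [NormedAddCommGroup E] [InnerProductSpace ℝ E] {v : E}

/-- The derivative at `v ≠ 0` of the vector field `v ↦ ‖v‖ ^ α • v`. -/
def normRpowSmulDeriv (α : ℝ) (v : E) : E →L[ℝ] E :=
  ‖v‖ ^ α • .id ℝ E + (α * ‖v‖ ^ (α - 2)) • (innerSL ℝ v).smulRight v

theorem hasStrictFDerivAt_norm_rpow_smul (α : ℝ) (hv : v ≠ 0) :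
    HasStrictFDerivAt (fun z : E => ‖z‖ ^ α • z) (normRpowSmulDeriv α v) v := by
  refine ((hasStrictFDerivAt_norm_rpow_of_ne_zero α hv).smul (hasStrictFDerivAt_id v)).congr_fderiv
    ?_
  ext z
  simp [normRpowSmulDeriv, smul_smul]

theorem continuousAt_normRpowSmulDeriv (α : ℝ) (hv : v ≠ 0) :
    ContinuousAt (normRpowSmulDeriv α) v := by
  have hrpow (a : ℝ) : ContinuousAt (fun z : E => ‖z‖ ^ a) v :=
    continuousAt_id.norm.rpow_const (.inl (norm_ne_zero_iff.2 hv))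
  have hproj : Continuous fun z : E => (innerSL ℝ z).smulRight z :=
    (ContinuousLinearMap.smulRightL ℝ E E).continuous₂.comp
      ((innerSL ℝ).continuous.prodMk continuous_id)
  exact ((hrpow α).smul continuousAt_const).add
    ((continuousAt_const.mul (hrpow (α - 2))).smul hproj.continuousAt)

theorem normRpowSmulDeriv_comp_self (α : ℝ) (hv : v ≠ 0) :
    normRpowSmulDeriv α v ∘L normRpowSmulDeriv α v = (‖v‖ ^ α) ^ 2 • .id ℝ E +
      ((2 * α + α ^ 2) * (‖v‖ ^ α * ‖v‖ ^ (α - 2))) • (innerSL ℝ v).smulRight v := by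
  ext z
  simp only [normRpowSmulDeriv, ContinuousLinearMap.comp_apply, _root_.add_apply,
    _root_.smul_apply, ContinuousLinearMap.id_apply, ContinuousLinearMap.smulRight_apply,
    innerSL_apply_apply, inner_add_right, real_inner_smul_right, real_inner_self_eq_norm_sq,
    ← rpow_sub_two_mul_sq α (norm_pos_iff.2 hv)]
  module

variable [FiniteDimensional ℝ E]

theorem adjoint_normRpowSmulDeriv (α : ℝ) (v : E) :
    ContinuousLinearMap.adjoint (normRpowSmulDeriv α v) = normRpowSmulDeriv α v := by
  refine (ContinuousLinearMap.eq_adjoint_iff _ _).2 (fun x y => ?_) |>.symm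
  simp only [normRpowSmulDeriv, _root_.add_apply, _root_.smul_apply, ContinuousLinearMap.id_apply,
    ContinuousLinearMap.smulRight_apply, innerSL_apply_apply, inner_add_left, inner_add_right,
    real_inner_smul_left, real_inner_smul_right, real_inner_comm v]
  ring

theorem trace_normRpowSmulDeriv_conj (α : ℝ) (hv : v ≠ 0) (A : E →L[ℝ] E) :
    LinearMap.trace ℝ E
        (normRpowSmulDeriv α v ∘L A ∘L ContinuousLinearMap.adjoint (normRpowSmulDeriv α v)) =
      (‖v‖ ^ α) ^ 2 * LinearMap.trace ℝ E A +
        (2 * α + α ^ 2) * (‖v‖ ^ α * ‖v‖ ^ (α - 2)) * ⟪A v, v⟫ := by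
  set L := normRpowSmulDeriv α v
  have hcycle : LinearMap.trace ℝ E (L ∘L A ∘L L) = LinearMap.trace ℝ E (A ∘L L ∘L L) :=
    LinearMap.trace_mul_comm ℝ L.toLinearMap (A ∘L L).toLinearMap
  have hrankOne : LinearMap.trace ℝ E (A ∘L (innerSL ℝ v).smulRight v) = ⟪A v, v⟫ := by
    have hcomp : A ∘L (innerSL ℝ v).smulRight v = (innerSL ℝ v).smulRight (A v) := by
      ext z
      simp
    rw [hcomp, real_inner_comm]
    exact LinearMap.trace_smulRight _ _
  rw [adjoint_normRpowSmulDeriv, hcycle, normRpowSmulDeriv_comp_self α hv,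
    ContinuousLinearMap.comp_add, ContinuousLinearMap.comp_smul, ContinuousLinearMap.comp_smul,
    ContinuousLinearMap.comp_id, ContinuousLinearMap.toLinearMap_add,
    ContinuousLinearMap.toLinearMap_smul, ContinuousLinearMap.toLinearMap_smul, map_add,
    map_smul, map_smul, hrankOne, smul_eq_mul, smul_eq_mul]

end NormRpowSmul

section WeightedInequality

variable {E : Type*} [NormedAddCommGroup E] [InnerProductSpace ℝ E] [FiniteDimensional ℝ E]

namespace IsC2PlusSupportFunction

variable {H : E → ℝ} (hH : IsC2PlusSupportFunction H) {p α : ℝ} {x : E}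
include hH

theorem continuousOn_norm_gradient_rpow (a : ℝ) :
    ContinuousOn (fun x => ‖gradient H x‖ ^ a) {0}ᶜ :=
  hH.continuousOn_gradient.norm.rpow_const fun _ hx =>
    .inl (norm_ne_zero_iff.2 (hH.gradient_ne_zero hx))

-- The two sides differ by `α (α + 1)` times a nonnegative multiple of `⟪D²H X, X⟫`, `X = ∇H`.
theorem coneDensity_mul_trace_le (hα : -1 ≤ α) (hα₀ : α ≤ 0) (hx : x ∈ sphere (0 : E) 1)
    (hdens : coneDensity H x * ‖gradient H x‖ ^ α = H x ^ p) :
    coneDensity H x * (H x * LinearMap.trace ℝ E (normRpowSmulDeriv α (gradient H x) ∘L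
        hessian H x ∘L ContinuousLinearMap.adjoint (normRpowSmulDeriv α (gradient H x)))) ≤
      divergence (fun y => (H y ^ (p + 1) * ‖gradient H y‖ ^ α) • tangentGradient H y) x +
        (Module.finrank ℝ E - 1) * (coneDensity H x * ((‖gradient H x‖ ^ α) ^ 2 * H x ^ 2)) -
        (p + 1) * (coneDensity H x *
          ((‖gradient H x‖ ^ α) ^ 2 * (‖gradient H x‖ ^ 2 - H x ^ 2))) := by
  have hx₀ : x ≠ 0 := ne_of_mem_sphere hx one_ne_zero
  have hH₀ := hH.pos x hx₀
  rw [trace_normRpowSmulDeriv_conj α (hH.gradient_ne_zero hx₀),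
    hH.divergence_smul_tangentGradient p α hx, Real.rpow_add_one hH₀.ne', ← hdens]
  set T := LinearMap.trace ℝ E (hessian H x)
  set q := ⟪hessian H x (gradient H x), gradient H x⟫
  have hq : 0 ≤ q := hH.inner_hessian_nonneg hx₀ _
  have hsign : α * (α + 1) * (coneDensity H x * H x *
      (‖gradient H x‖ ^ α * ‖gradient H x‖ ^ (α - 2)) * q) ≤ 0 :=
    mul_nonpos_of_nonpos_of_nonneg (mul_nonpos_of_nonpos_of_nonneg hα₀ (by linarith))
      (by have := (hH.coneDensity_pos hx).le; positivity)
  have htrace : divergence (gradient H) x = T := rfl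
  rw [htrace]
  linarith

variable [MeasurableSpace E] [BorelSpace E]

theorem integrable_coneDensity_mul {g : E → ℝ} (hg : ContinuousOn g {0}ᶜ) :
    Integrable (fun x : sphere (0 : E) 1 => coneDensity H x * g x) volume.toSphere :=
  integrable_toSphere_of_continuousOn volume <| hH.continuousOn_coneDensity.mul <|
    hg.mono fun _ hx => ne_of_mem_sphere hx one_ne_zero

theorem integrable_norm_gradient_rpow_mul_sq (α : ℝ) : Integrable (fun x : sphere (0 : E) 1 =>
    coneDensity H x * ((‖gradient H x‖ ^ α) ^ 2 * H x ^ 2)) volume.toSphere :=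
  hH.integrable_coneDensity_mul <|
    ((hH.continuousOn_norm_gradient_rpow α).pow 2).mul (hH.continuousOn.pow 2)

theorem integrable_norm_gradient_rpow_mul_sub (α : ℝ) : Integrable (fun x : sphere (0 : E) 1 =>
    coneDensity H x * ((‖gradient H x‖ ^ α) ^ 2 * (‖gradient H x‖ ^ 2 - H x ^ 2)))
    volume.toSphere :=
  hH.integrable_coneDensity_mul <| ((hH.continuousOn_norm_gradient_rpow α).pow 2).mul <|
    (hH.continuousOn_gradient.norm.pow 2).sub (hH.continuousOn.pow 2)

theorem integrable_coneDensity_mul_trace (α : ℝ) : Integrable (fun x : sphere (0 : E) 1 =>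
    coneDensity H x * (H x * LinearMap.trace ℝ E (normRpowSmulDeriv α (gradient H x) ∘L
      hessian H x ∘L ContinuousLinearMap.adjoint (normRpowSmulDeriv α (gradient H x)))))
    volume.toSphere := by
  have hL : ContinuousOn (fun x => normRpowSmulDeriv α (gradient H x)) {0}ᶜ := fun x hx =>
    (continuousAt_normRpowSmulDeriv α (hH.gradient_ne_zero hx)).comp_continuousWithinAt
      (hH.continuousOn_gradient x hx)
  exact hH.integrable_coneDensity_mul <| hH.continuousOn.mul <|
    continuous_trace.comp_continuousOn <| hL.clm_comp <| hH.continuousOn_hessian.clm_comp <|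
      ContinuousLinearMap.adjoint.continuous.comp_continuousOn hL

variable [Nontrivial E]

theorem integral_coneDensity_mul_trace_le (hα : -1 ≤ α) (hα₀ : α ≤ 0)
    (hdens : ∀ x ∈ sphere (0 : E) 1, coneDensity H x * ‖gradient H x‖ ^ α = H x ^ p) :
    ∫ x : sphere (0 : E) 1, coneDensity H x * (H x * LinearMap.trace ℝ E
        (normRpowSmulDeriv α (gradient H x) ∘L hessian H x ∘L
          ContinuousLinearMap.adjoint (normRpowSmulDeriv α (gradient H x)))) ∂volume.toSphere ≤
      (Module.finrank ℝ E - 1) * (∫ x : sphere (0 : E) 1,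
        coneDensity H x * ((‖gradient H x‖ ^ α) ^ 2 * H x ^ 2) ∂volume.toSphere) -
      (p + 1) * ∫ x : sphere (0 : E) 1, coneDensity H x *
        ((‖gradient H x‖ ^ α) ^ 2 * (‖gradient H x‖ ^ 2 - H x ^ 2)) ∂volume.toSphere := by
  have hdivi : Integrable (fun x : sphere (0 : E) 1 => divergence
      (fun y => (H y ^ (p + 1) * ‖gradient H y‖ ^ α) • tangentGradient H y) x) volume.toSphere :=
    integrable_toSphere_of_continuousOn volume fun x hx => (continuousAt_divergence
      (hH.contDiffAt_rpow_smul_tangentGradient p α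
        (ne_of_mem_sphere hx one_ne_zero))).continuousWithinAt
  have hsqi := (hH.integrable_norm_gradient_rpow_mul_sq α).const_mul (Module.finrank ℝ E - 1 : ℝ)
  have hgradi := (hH.integrable_norm_gradient_rpow_mul_sub α).const_mul (p + 1)
  refine (integral_mono (hH.integrable_coneDensity_mul_trace α) ((hdivi.add hsqi).sub hgradi)
    fun x => hH.coneDensity_mul_trace_le hα hα₀ x.2 (hdens x x.2)).trans_eq ?_
  rw [integral_sub' (hdivi.add hsqi) hgradi, integral_add' hdivi hsqi,
    hH.integral_divergence_smul_tangentGradient, zero_add, integral_const_mul, integral_const_mul]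

theorem weighted_gradient_integral_le (hα : -1 ≤ α) (hα₀ : α ≤ 0)
    (hdens : ∀ x ∈ sphere (0 : E) 1, coneDensity H x * ‖gradient H x‖ ^ α = H x ^ p) :
    (Module.finrank ℝ E + p) * ∫ x : sphere (0 : E) 1, coneDensity H x *
        ((‖gradient H x‖ ^ α) ^ 2 * (‖gradient H x‖ ^ 2 - H x ^ 2)) ∂volume.toSphere ≤
      (Module.finrank ℝ E - 1) * ‖∫ x : sphere (0 : E) 1,
          coneDensity H x • (‖gradient H x‖ ^ α • gradient H x) ∂volume.toSphere‖ ^ 2 /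
        ∫ x : sphere (0 : E) 1, coneDensity H x ∂volume.toSphere := by
  have hsub : sphere (0 : E) 1 ⊆ {0}ᶜ := fun x hx => ne_of_mem_sphere hx one_ne_zero
  have hlocal := hH.local_brunn_minkowski_vector
    (F := fun x => ‖gradient H x‖ ^ α • gradient H x)
    (L := fun x => normRpowSmulDeriv α (gradient H x))
    (fun x hx => (hasStrictFDerivAt_norm_rpow_smul α (hH.gradient_ne_zero (hsub hx))).comp x
      (hH.hasStrictFDerivAt_gradient (hsub hx)))
    fun x hx => (continuousAt_normRpowSmulDeriv α (hH.gradient_ne_zero (hsub hx))).comp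
      (hH.hasStrictFDerivAt_gradient (hsub hx)).continuousAt
  have htrace := hH.integral_coneDensity_mul_trace_le hα hα₀ hdens
  have hsplit : ∫ x : sphere (0 : E) 1,
      coneDensity H x * ‖‖gradient H x‖ ^ α • gradient H x‖ ^ 2 ∂volume.toSphere =
      (∫ x : sphere (0 : E) 1, coneDensity H x *
        ((‖gradient H x‖ ^ α) ^ 2 * (‖gradient H x‖ ^ 2 - H x ^ 2)) ∂volume.toSphere) +
      ∫ x : sphere (0 : E) 1, coneDensity H x *
        ((‖gradient H x‖ ^ α) ^ 2 * H x ^ 2) ∂volume.toSphere := by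
    rw [← integral_add (hH.integrable_norm_gradient_rpow_mul_sub α)
      (hH.integrable_norm_gradient_rpow_mul_sq α)]
    congr 1 with x
    rw [norm_smul, Real.norm_of_nonneg (Real.rpow_nonneg (norm_nonneg _) _)]
    ring
  rw [hsplit] at hlocal
  rw [mul_div_assoc]
  linarith [hlocal.trans htrace]

end IsC2PlusSupportFunction

end WeightedInequality

section EuclideanCoordinates

variable {n : ℕ} {H : Euc n → ℝ} {x : Euc n}

theorem ehess_apply (hx : ContDiffAt ℝ 2 H x) (i j : Fin (n + 1)) :
    ehess n H x i j = hessian H x (EuclideanSpace.single j 1) i := by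
  have hdiff : DifferentiableAt ℝ (fderiv ℝ H) x :=
    (hx.fderiv_right (m := 1) le_rfl).differentiableAt one_ne_zero
  have hcoord : hessian H x (EuclideanSpace.single j 1) i =
      ⟪hessian H x (EuclideanSpace.single j 1), EuclideanSpace.single i 1⟫ := by
    simp [EuclideanSpace.inner_single_right]
  rw [hcoord, inner_hessian_comm hx, real_inner_comm, inner_hessian_left, ehess, of_apply,
    fderiv_clm_apply hdiff (differentiableAt_const _)]
  simp

theorem toEuclideanCLM_bmat (hx : ContDiffAt ℝ 2 H x) :
    toEuclideanCLM (𝕜 := ℝ) (bmat n H x) = hessian H x + (H x • innerSL ℝ x).smulRight x := by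
  refine ContinuousLinearMap.coe_injective ((EuclideanSpace.basisFun _ ℝ).toBasis.ext fun j => ?_)
  ext i
  simp [bmat, ehess_apply hx, EuclideanSpace.inner_single_right, mul_comm,
    mul_assoc]

theorem det_bmat (hx : ContDiffAt ℝ 2 H x) :
    (bmat n H x).det = (hessian H x + (H x • innerSL ℝ x).smulRight x).det := by
  rw [← toEuclideanCLM_bmat hx, ContinuousLinearMap.det, coe_toEuclideanCLM_eq_toEuclideanLin,
    toEuclideanLin_eq_toLin_orthonormal, LinearMap.det_toLin]

theorem inner_hessian_add_pos_of_posDef_bmat (hx : ContDiffAt ℝ 2 H x) (hpd : (bmat n H x).PosDef)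
    {v : Euc n} (hv : v ≠ 0) : 0 < ⟪hessian H x v, v⟫ + H x * ⟪x, v⟫ ^ 2 := by
  have hinner : ⟪v, toEuclideanCLM (𝕜 := ℝ) (bmat n H x) v⟫ =
      ⟪hessian H x v, v⟫ + H x * ⟪x, v⟫ ^ 2 := by
    rw [toEuclideanCLM_bmat hx, real_inner_comm, _root_.add_apply, inner_add_left]
    simp only [ContinuousLinearMap.smulRight_apply, _root_.smul_apply, innerSL_apply_apply,
      smul_eq_mul, real_inner_smul_left]
    ring
  rw [← hinner, inner_toEuclideanCLM]
  simpa using hpd.dotProduct_mulVec_pos (x := v.ofLp) (by simpa using hv)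

-- By homogeneity `x` may be taken of norm one, and `v` orthogonal to `x` as `D²H(x) x = 0`.
theorem inner_hessian_pos_of_posDef_bmat (hhom : IsPosHomogeneous H)
    (hsmooth : ContDiffOn ℝ 2 H {0}ᶜ)
    (hpd : ∀ x ∈ sphere (0 : Euc n) 1, (bmat n H x).PosDef) (hx : x ≠ 0) {v : Euc n}
    (hv : v ∉ Submodule.span ℝ {x}) : 0 < ⟪hessian H x v, v⟫ := by
  have hcd {y : Euc n} (hy : y ≠ 0) : ContDiffAt ℝ 2 H y :=
    hsmooth.contDiffAt (isOpen_compl_singleton.mem_nhds hy)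
  set y := ‖x‖⁻¹ • x
  have hy : y ∈ sphere (0 : Euc n) 1 := inv_norm_smul_mem_sphere hx
  have hy₀ : y ≠ 0 := ne_of_mem_sphere hy one_ne_zero
  set w := v - ⟪y, v⟫ • y
  have hw : w ≠ 0 := fun h => hv <| Submodule.mem_span_singleton.2
    ⟨⟪y, v⟫ * ‖x‖⁻¹, by rw [mul_smul]; exact (sub_eq_zero.1 h).symm⟩
  have horth : ⟪y, w⟫ = 0 := by
    rw [inner_sub_right, real_inner_smul_right, real_inner_self_eq_norm_sq,
      mem_sphere_zero_iff_norm.1 hy]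
    ring
  have hker : hessian H y w = hessian H y v := by
    rw [map_sub, map_smul, hhom.hessian_self (hcd hy₀), smul_zero, sub_zero]
  have hinner : ⟪hessian H y w, w⟫ = ⟪hessian H y v, v⟫ := by
    rw [hker, inner_sub_right, real_inner_smul_right, inner_hessian_comm (hcd hy₀) v y,
      hhom.hessian_self (hcd hy₀), inner_zero_right, mul_zero, sub_zero]
  have hpos := inner_hessian_add_pos_of_posDef_bmat (hcd hy₀) (hpd y hy) hw
  rw [horth, hinner, zero_pow two_ne_zero, mul_zero, add_zero] at hpos
  rw [← hhom.hessian_smul (inv_pos.2 (norm_pos_iff.2 hx)), _root_.smul_apply, real_inner_smul_left]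
  exact mul_pos (inv_pos.2 (norm_pos_iff.2 hx)) hpos

theorem isC2PlusSupportFunction_of_posDef_bmat (hhom : IsPosHomogeneous H)
    (hconv : ConvexOn ℝ Set.univ H) (hsmooth : ContDiffOn ℝ 2 H {0}ᶜ)
    (hpos : ∀ x ∈ sphere (0 : Euc n) 1, 0 < H x)
    (hpd : ∀ x ∈ sphere (0 : Euc n) 1, (bmat n H x).PosDef) : IsC2PlusSupportFunction H where
  isPosHomogeneous := hhom
  convexOn := hconv
  contDiffOn := hsmooth
  pos x hx := by
    have hunit := hpos _ (inv_norm_smul_mem_sphere hx)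
    rw [hhom _ (inv_pos.2 (norm_pos_iff.2 hx))] at hunit
    exact pos_of_mul_pos_right hunit (inv_nonneg.2 (norm_nonneg x))
  inner_hessian_pos _ hx _ hv := inner_hessian_pos_of_posDef_bmat hhom hsmooth hpd hx hv

namespace IsC2PlusSupportFunction

variable (hH : IsC2PlusSupportFunction H)
include hH

theorem volDens_eq_det_bmat (hx : x ≠ 0) : volDens n H x = (bmat n H x).det :=
  mul_div_cancel₀ _ (hH.pos x hx).ne'

theorem coneDensity_eq_volDens (hx : x ∈ sphere (0 : Euc n) 1) (hpd : (bmat n H x).PosDef) :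
    coneDensity H x = volDens n H x := by
  have hx₀ : x ≠ 0 := ne_of_mem_sphere hx one_ne_zero
  rw [coneDensity, hH.det_coneMapDeriv hx, ← det_bmat (hH.contDiffAt hx₀),
    abs_of_pos hpd.det_pos, hH.volDens_eq_det_bmat hx₀]

theorem sphGrad_eq (hx : x ∈ sphere (0 : Euc n) 1) : sphGrad n H x = gradient H x - H x • x := by
  have hx₀ : x ≠ 0 := ne_of_mem_sphere hx one_ne_zero
  have hextend : (fun y => H (‖y‖⁻¹ • y)) =ᶠ[nhds x] fun y => ‖y‖ ^ (-1 : ℝ) * H y := by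
    filter_upwards [isOpen_ne.mem_nhds hx₀] with y hy
    rw [hH.isPosHomogeneous _ (inv_pos.2 (norm_pos_iff.2 hy)), Real.rpow_neg_one]
  have hderiv := (hasStrictFDerivAt_norm_rpow_of_ne_zero (-1) hx₀).hasFDerivAt.mul
    (hH.hasFDerivAt hx₀)
  have hgrad : HasGradientAt (fun y => ‖y‖ ^ (-1 : ℝ) * H y) (gradient H x - H x • x) x := by
    refine hderiv.congr_fderiv (ContinuousLinearMap.ext fun v => ?_)
    simp only [mem_sphere_zero_iff_norm.1 hx, Real.one_rpow, _root_.add_apply, _root_.smul_apply,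
      innerSL_apply_apply, smul_eq_mul, InnerProductSpace.toDual_apply_apply, inner_sub_left,
      real_inner_smul_left]
    ring
  exact (hgrad.congr_of_eventuallyEq hextend).gradient

theorem norm_sphGrad_sq (hx : x ∈ sphere (0 : Euc n) 1) :
    ‖sphGrad n H x‖ ^ 2 = ‖gradient H x‖ ^ 2 - H x ^ 2 := by
  rw [hH.sphGrad_eq hx, norm_sub_sq_real, real_inner_smul_right,
    hH.inner_gradient_self (ne_of_mem_sphere hx one_ne_zero), norm_smul,
    mem_sphere_zero_iff_norm.1 hx, mul_one, Real.norm_eq_abs, sq_abs]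
  ring

theorem volDens_mul_norm_gradient_rpow {p α : ℝ} (hx : x ≠ 0)
    (heq : H x ^ (p - 1) * ‖gradient H x‖ ^ (-α) * gaussCurv n H x = 1) :
    volDens n H x * ‖gradient H x‖ ^ α = H x ^ p := by
  have hX : 0 < ‖gradient H x‖ ^ α :=
    Real.rpow_pos_of_pos (norm_pos_iff.2 (hH.gradient_ne_zero hx)) α
  have hσ : sigman n H x ≠ 0 := fun h => by simp [gaussCurv, h] at heq
  rw [gaussCurv, Real.rpow_neg (norm_nonneg _), Real.rpow_sub_one (hH.pos x hx).ne'] at heq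
  have := (hH.pos x hx).ne'
  field_simp at heq
  rw [volDens, heq]
  ring

end IsC2PlusSupportFunction

end EuclideanCoordinates

theorem key_integral_inequality_simplified_general (n : ℕ) (p q α : ℝ) (hα : α = q - (n : ℝ) - 1)
    (H : Euc n → ℝ) (hhomog : ∀ c : ℝ, 0 < c → ∀ x : Euc n, H (c • x) = c * H x)
    (hconv : ConvexOn ℝ Set.univ H) (hsmooth : ContDiffOn ℝ 2 H {(0 : Euc n)}ᶜ)
    (hpos : ∀ x ∈ sphere (0 : Euc n) 1, 0 < H x)
    (hposdef : ∀ x ∈ sphere (0 : Euc n) 1, (bmat n H x).PosDef)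
    (heq : ∀ x ∈ sphere (0 : Euc n) 1,
      H x ^ (p - 1) * ‖gradient H x‖ ^ ((n : ℝ) + 1 - q) * gaussCurv n H x = 1)
    (hq1 : (n : ℝ) ≤ q) (hq2 : q ≤ (n : ℝ) + 1) :
    ((n : ℝ) + 1 + p) * ∫ x : sphere (0 : Euc n) 1,
          volDens n H x * (‖gradient H x‖ ^ (2 * α) * ‖sphGrad n H x‖ ^ 2) ∂(sphMeasure n)
      ≤ (n : ℝ) * ‖∫ x : sphere (0 : Euc n) 1,
            volDens n H x • (‖gradient H x‖ ^ α • gradient H x) ∂(sphMeasure n)‖ ^ 2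
          / ∫ x : sphere (0 : Euc n) 1, volDens n H x ∂(sphMeasure n) := by
  have hH := isC2PlusSupportFunction_of_posDef_bmat hhomog hconv hsmooth hpos hposdef
  have hD (x : sphere (0 : Euc n) 1) : coneDensity H x = volDens n H x :=
    hH.coneDensity_eq_volDens x.2 (hposdef x x.2)
  have hdens (x : Euc n) (hx : x ∈ sphere (0 : Euc n) 1) :
      coneDensity H x * ‖gradient H x‖ ^ α = H x ^ p := by
    rw [hH.coneDensity_eq_volDens hx (hposdef x hx)]
    refine hH.volDens_mul_norm_gradient_rpow (ne_of_mem_sphere hx one_ne_zero) ?_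
    convert heq x hx using 4
    linarith
  have hrpow (x : Euc n) : (‖gradient H x‖ ^ α) ^ 2 = ‖gradient H x‖ ^ (2 * α) := by
    rw [mul_comm, Real.rpow_mul (norm_nonneg _), Real.rpow_two]
  have hgrad (x : sphere (0 : Euc n) 1) : ‖gradient H x‖ ^ 2 - H x ^ 2 = ‖sphGrad n H x‖ ^ 2 :=
    (hH.norm_sphGrad_sq x.2).symm
  have hmain := hH.weighted_gradient_integral_le (by linarith) (by linarith) hdens
  simpa only [sphMeasure, hD, hrpow, hgrad, finrank_euclideanSpace_fin, Nat.cast_add, Nat.cast_one,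
    add_sub_cancel_right] using hmain

/-- For a smooth, strictly convex body `K ⊂ ℝ^{n+1}` (`n ≥ 2`) with the
origin in its interior satisfying `h^{p-1}|Dh|^{n+1-q}𝒦 = 1` on `S^n`, with `n ≤ q ≤ n+1`
and `α = q - n - 1`: `(n+1+p) ∫ r^{2α}|∇̄h|² dV ≤ n|∫ r^α X dV|²/∫ dV`. -/
theorem key_integral_inequality_simplified
    (n : ℕ) (hn : 2 ≤ n) (p q α : ℝ) (hα : α = q - (n : ℝ) - 1)
    (H : Euc n → ℝ) (K : Set (Euc n))
    (hK : K = {y : Euc n | ∀ x : Euc n, ⟪x, y⟫ ≤ H x})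
    (hhomog : ∀ c : ℝ, 0 < c → ∀ x : Euc n, H (c • x) = c * H x)
    (hconv : ConvexOn ℝ Set.univ H)
    (hsmooth : ContDiffOn ℝ (⊤ : ℕ∞) H {(0 : Euc n)}ᶜ)
    (hpos : ∀ x ∈ sphere (0 : Euc n) 1, 0 < H x)
    (hposdef : ∀ x ∈ sphere (0 : Euc n) 1, (bmat n H x).PosDef)
    (heq : ∀ x ∈ sphere (0 : Euc n) 1,
      H x ^ (p - 1) * ‖gradient H x‖ ^ ((n : ℝ) + 1 - q) * gaussCurv n H x = 1)
    (hq1 : (n : ℝ) ≤ q) (hq2 : q ≤ (n : ℝ) + 1) :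
    ((n : ℝ) + 1 + p) * ∫ x : sphere (0 : Euc n) 1,
          volDens n H x * (‖gradient H x‖ ^ (2 * α) * ‖sphGrad n H x‖ ^ 2) ∂(sphMeasure n)
      ≤ (n : ℝ) * ‖∫ x : sphere (0 : Euc n) 1,
            volDens n H x • (‖gradient H x‖ ^ α • gradient H x) ∂(sphMeasure n)‖ ^ 2
          / ∫ x : sphere (0 : Euc n) 1, volDens n H x ∂(sphMeasure n) := by
  exact key_integral_inequality_simplified_general n p q α hα H hhomog hconv
    (contDiffOn_infty.1 hsmooth 2) hpos hposdef heq hq1 hq2
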